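/- arXiv:1211.5209 — 4 statements merged into one kernel-verified Lean document; each statement's English description precedes it below -/
import Mathlib

section
/- The least cardinality of a family F ⊆ ω^ω such that for every g ∈ ω^ω there exists f ∈ F with f(k) = g(k) for infinitely many k equals non(M), the least cardinality of a non-meager subset of ω^ω. (In the paper's notation: b_≂ = non(M), where f ≂ g iff f(k) ≠ g(k) for all but finitely many k.) -/
open Cardinal Set

namespace NonM

/-- every `g` is infinitely often equal to a member of `F` -/
def InfEq (F : Set (ℕ → ℕ)) : Prop :=
  ∀ g : ℕ → ℕ, ∃ f ∈ F, {k : ℕ | f k = g k}.Infinite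

theorem InfEq.transfer {F : Set (ℕ → ℕ)} (hF : InfEq F) {T : Type} [Denumerable T]
    (g : ℕ → T) : ∃ f ∈ F, {k : ℕ | Denumerable.ofNat T (f k) = g k}.Infinite := by
  obtain ⟨f, hf, h⟩ := hF (fun k => Encodable.encode (g k))
  refine ⟨f, hf, h.mono ?_⟩
  intro k hk
  simp only [mem_ofPred_eq] at hk ⊢
  rw [hk, Denumerable.ofNat_encode]

theorem InfEq.infinite {F : Set (ℕ → ℕ)} (hF : InfEq F) : F.Infinite := by
  intro hfin
  obtain ⟨f, hf, h⟩ := hF (fun k => 1 + ∑ f ∈ hfin.toFinset, f k)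
  obtain ⟨k, hk⟩ := h.nonempty
  simp only [mem_ofPred_eq] at hk
  have : f k ≤ ∑ f ∈ hfin.toFinset, f k :=
    Finset.single_le_sum (f := fun f : ℕ → ℕ => f k) (fun _ _ => Nat.zero_le _)
      (hfin.mem_toFinset.2 hf)
  omega

theorem exists_inj (D : ℕ → Finset ℕ) (hD : ∀ n, n < (D n).card) :
    ∃ k : ℕ → ℕ, Function.Injective k ∧ ∀ n, k n ∈ D n := by
  rw [← Finset.all_card_le_biUnion_card_iff_exists_injective]
  intro s
  rcases s.eq_empty_or_nonempty with rfl | hs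
  · simp
  · have h1 : s ⊆ Finset.range (s.max' hs + 1) := fun x hx => by
      have := s.le_max' x hx
      simp; omega
    have h2 := Finset.card_le_card h1
    have h3 : D (s.max' hs) ⊆ s.biUnion D := Finset.subset_biUnion_of_mem D (s.max'_mem hs)
    have h4 := Finset.card_le_card h3
    have := hD (s.max' hs)
    simp at h2
    omega

/-- Infinite equality on prescribed infinite sets. -/
theorem exists_restrict (f : ℕ → ℕ) : ∃ f' : ℕ → ℕ, ∀ (g : ℕ → ℕ) (D : ℕ → Finset ℕ)
    (X : Set ℕ) (N : ℕ → ℕ),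
    (∀ n, n < (D n).card) → (∀ n, ∀ k ∈ D n, k ∈ X) → (∀ n, ∀ k ∈ D n, k < N n) →
    {n : ℕ | Denumerable.ofNat (Finset ℕ × List ℕ) (f n) =
      (D n, (List.range (N n)).map g)}.Infinite →
    {k : ℕ | k ∈ X ∧ f' k = g k}.Infinite := by
  classical
  let P : ℕ → Finset ℕ × List ℕ := fun n => Denumerable.ofNat (Finset ℕ × List ℕ) (f n)
  obtain ⟨k, hinj, hk⟩ := exists_inj
    (fun n => if n < (P n).1.card then (P n).1 else Finset.range (n+1)) (by
      intro n; split_ifs with h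
      · exact h
      · simp)
  refine ⟨fun j => (P (Function.invFun k j)).2.getD j 0, ?_⟩
  intro g D X N hD hX hN hinf
  refine (hinf.image hinj.injOn).mono ?_
  rintro _ ⟨n, hn, rfl⟩
  have hn' : P n = (D n, (List.range (N n)).map g) := hn
  have hkn := hk n
  rw [hn'] at hkn
  simp only [hD n, if_true] at hkn
  refine ⟨hX n _ hkn, ?_⟩
  simp only [Function.leftInverse_invFun hinj n, hn']
  have := hN n _ hkn
  simp [List.getD_eq_getElem?_getD, this]

/-- the reparsed function -/
noncomputable def Phi (f : ℕ → ℕ) : ℕ → ℕ := (exists_restrict f).choose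

theorem Phi_spec {F : Set (ℕ → ℕ)} (hF : InfEq F) (g : ℕ → ℕ) (X : Set ℕ) (hX : X.Infinite) :
    ∃ f ∈ F, {k : ℕ | k ∈ X ∧ Phi f k = g k}.Infinite := by
  have h1 : ∀ n : ℕ, ∃ D : Finset ℕ, (D : Set ℕ) ⊆ X ∧ D.card = n + 1 :=
    fun n => hX.exists_subset_card_eq (n+1)
  choose D hDX hDc using h1
  obtain ⟨f, hf, h⟩ := hF.transfer
    (fun n => (D n, (List.range ((D n).sup id + 1)).map g))
  refine ⟨f, hf, (exists_restrict f).choose_spec g D X (fun n => (D n).sup id + 1) ?_ ?_ ?_ h⟩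
  · intro n; rw [hDc]; omega
  · intro n k hk; exact hDX n hk
  · intro n k hk
    have : id k ≤ (D n).sup id := Finset.le_sup hk
    simp only [id] at this
    omega

/-- list number `n` -/
def dl (n : ℕ) : List ℕ := Denumerable.ofNat (List ℕ) n

/-- end extension -/
def Ext (s t : List ℕ) : Prop :=
  s.length ≤ t.length ∧ ∀ j < s.length, s.getD j 0 = t.getD j 0

theorem Ext.refl (s : List ℕ) : Ext s s := ⟨le_rfl, fun _ _ => rfl⟩

theorem Ext.trans {s t u : List ℕ} (h : Ext s t) (h' : Ext t u) : Ext s u :=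
  ⟨h.1.trans h'.1, fun j hj => (h.2 j hj).trans (h'.2 j (hj.trans_le h.1))⟩

/-- basic open set -/
def cyl (s : List ℕ) : Set (ℕ → ℕ) := {x | ∀ j < s.length, x j = s.getD j 0}

theorem isOpen_cyl (s : List ℕ) : IsOpen (cyl s) := by
  have : cyl s = ⋂ j ∈ Finset.range s.length, {x : ℕ → ℕ | x j = s.getD j 0} := by
    ext x; simp [cyl]
  rw [this]
  refine isOpen_biInter_finset fun j _ => ?_
  exact (isOpen_discrete ({s.getD j 0} : Set ℕ)).preimage (continuous_apply (A := fun _ : ℕ => ℕ) j)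

theorem exists_ext (V : Set (ℕ → ℕ)) (hV : IsOpen V) (hd : Dense V) (s : List ℕ) :
    ∃ t, Ext s t ∧ cyl t ⊆ V := by
  obtain ⟨x, hxs, hxV⟩ := hd.inter_open_nonempty (cyl s) (isOpen_cyl s)
    ⟨fun j => s.getD j 0, fun j _ => rfl⟩
  obtain ⟨I, u, hu, hIV⟩ := isOpen_pi_iff.1 hV x hxV
  let N := max s.length (I.sup id + 1)
  refine ⟨(List.range N).map x, ⟨by simp [N], ?_⟩, ?_⟩
  · intro j hj
    have hjN : j < N := hj.trans_le (le_max_left _ _)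
    rw [← hxs j hj]
    simp [List.getD_eq_getElem?_getD, hjN]
  · intro y hy
    refine hIV fun j hj => ?_
    have h1 : id j ≤ I.sup id := Finset.le_sup (f := id) hj
    have h2 : I.sup id + 1 ≤ N := le_max_right _ _
    have hjN : j < N := by simp only [id] at h1; omega
    have := hy j (by simpa using hjN)
    rw [this]
    simpa [List.getD_eq_getElem?_getD, hjN] using (hu j hj).2

/-- monotone majorant -/
def up (h : ℕ → ℕ) (m : ℕ) : ℕ := m + 1 + ∑ j ∈ Finset.range (m+1), h j

theorem up_mono (h : ℕ → ℕ) : Monotone (up h) := by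
  intro a b hab
  have : ∑ j ∈ Finset.range (a+1), h j ≤ ∑ j ∈ Finset.range (b+1), h j :=
    Finset.sum_le_sum_of_subset (Finset.range_mono (by omega))
  unfold up; omega

theorem le_up (h : ℕ → ℕ) (m : ℕ) : h m ≤ up h m := by
  have : h m ≤ ∑ j ∈ Finset.range (m+1), h j :=
    Finset.single_le_sum (f := h) (fun _ _ => Nat.zero_le _) (by simp)
  unfold up; omega

/-- scale -/
def M (h : ℕ → ℕ) : ℕ → ℕ
  | 0 => Encodable.encode ([] : List ℕ)
  | i + 1 => up h (M h i)

theorem M_lt (h : ℕ → ℕ) (i : ℕ) : M h i < M h (i+1) := by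
  simp only [M, up]; omega

theorem le_M (h : ℕ → ℕ) (i : ℕ) : i ≤ M h i := by
  induction i with
  | zero => simp
  | succ i ih => have := M_lt h i; omega

theorem infinite_good (h φ : ℕ → ℕ) (hφ : Monotone φ) 
    (hinf : {m | h m = φ (φ m)}.Infinite) :
    {i | φ (M h i) ≤ M h (i+1)}.Infinite := by
  rw [Set.infinite_iff_exists_gt] 
  intro a
  obtain ⟨m, hm, hma⟩ := hinf.exists_gt (M h (a+1))
  simp only [mem_ofPred_eq] at hm
  have hex : ∃ i, m < M h i := ⟨m+1, le_M h (m+1)⟩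
  have hmono : StrictMono (M h) := strictMono_nat_of_lt_succ (M_lt h)
  obtain ⟨i, hi1, hi2⟩ : ∃ i, M h i ≤ m ∧ m < M h (i+1) := by
    classical
    have hs := Nat.find_spec hex
    have hmin := fun j hj => Nat.find_min hex (m := j) hj
    rcases hk : Nat.find hex with _ | i
    · rw [hk] at hs
      have := hmono.monotone (Nat.zero_le (a+1))
      omega
    · rw [hk] at hs
      exact ⟨i, not_lt.1 (hmin i (by omega)), hs⟩
  have hai : a < i + 1 := by
    have := hmono.lt_iff_lt.1 (hma.trans hi2)
    omega
  have hai' : a < i := by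
    have := hmono.lt_iff_lt.1 (hma.trans hi2)
    omega
  by_cases hc : M h (i+1) ≤ φ m
  · refine ⟨i+1, ?_, hai⟩
    simp only [mem_ofPred_eq]
    calc φ (M h (i+1)) ≤ φ (φ m) := hφ hc
      _ = h m := hm.symm
      _ ≤ up h m := le_up h m
      _ ≤ up h (M h (i+1)) := up_mono h hi2.le
  · refine ⟨i, ?_, hai'⟩
    simp only [mem_ofPred_eq]
    have := hφ hi1
    omega

open Classical in
/-- codes of the initial segments -/
noncomputable def pos (h f : ℕ → ℕ) : ℕ → ℕ
  | 0 => Encodable.encode ([] : List ℕ)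
  | i + 1 =>
    if (dl (f i)).getD (pos h f i) 0 ≤ M h (i+1) ∧
        Ext (dl (pos h f i)) (dl ((dl (f i)).getD (pos h f i) 0))
    then (dl (f i)).getD (pos h f i) 0 else pos h f i

theorem pos_le (h f : ℕ → ℕ) (i : ℕ) : pos h f i ≤ M h i := by
  induction i with
  | zero => simp [pos, M]
  | succ i ih =>
    have := M_lt h i
    rw [pos]
    split_ifs with hc
    · exact hc.1
    · omega

theorem pos_ext (h f : ℕ → ℕ) {i j : ℕ} (hij : i ≤ j) :
    Ext (dl (pos h f i)) (dl (pos h f j)) := by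
  induction j, hij using Nat.le_induction with
  | base => exact Ext.refl _
  | succ j _ ih =>
    refine ih.trans ?_
    rw [pos]
    split_ifs with hc
    · exact hc.2
    · exact Ext.refl _

theorem exists_lim (h f : ℕ → ℕ) : ∃ x : ℕ → ℕ, ∀ i, x ∈ cyl (dl (pos h f i)) := by
  have : ∀ n : ℕ, ∃ v : ℕ, ∀ i, n < (dl (pos h f i)).length → v = (dl (pos h f i)).getD n 0 := by
    intro n
    by_cases hn : ∃ i, n < (dl (pos h f i)).length
    · obtain ⟨i, hi⟩ := hn
      refine ⟨(dl (pos h f i)).getD n 0, fun j hj => ?_⟩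
      rcases le_total i j with hij | hij
      · exact (pos_ext h f hij).2 n hi
      · exact ((pos_ext h f hij).2 n hj).symm
    · exact ⟨0, fun i hi => (hn ⟨i, hi⟩).elim⟩
  choose x hx using this
  exact ⟨x, fun i n hn => hx n i hn⟩

/-- the real built from `h` and `f` -/
noncomputable def lim (h f : ℕ → ℕ) : ℕ → ℕ := (exists_lim h f).choose

theorem lim_mem (h f : ℕ → ℕ) (i : ℕ) : lim h f ∈ cyl (dl (pos h f i)) :=
  (exists_lim h f).choose_spec i

theorem main_aux {F : Set (ℕ → ℕ)} (hF : InfEq F) (V : ℕ → Set (ℕ → ℕ))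
    (hV : ∀ n, IsOpen (V n)) (hd : ∀ n, Dense (V n)) :
    ∃ h ∈ F, ∃ f ∈ F, {i | lim h (Phi f) ∈ V i}.Infinite := by
  have hψ : ∀ n c : ℕ, ∃ c', Ext (dl c) (dl c') ∧ cyl (dl c') ⊆ V n := by
    intro n c
    obtain ⟨t, ht⟩ := exists_ext (V n) (hV n) (hd n) (dl c)
    exact ⟨Encodable.encode t, by simpa [dl] using ht⟩
  choose ψ hψ1 hψ2 using hψ
  let φ : ℕ → ℕ := fun m => ∑ n ∈ Finset.range (m+1), ∑ c ∈ Finset.range (m+1), ψ n c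
  have hφ : Monotone φ := by
    intro a b hab
    have hs : Finset.range (a+1) ⊆ Finset.range (b+1) := Finset.range_mono (by omega)
    exact (Finset.sum_le_sum fun n _ => Finset.sum_le_sum_of_subset hs).trans
      (Finset.sum_le_sum_of_subset hs)
  have hψφ : ∀ m n c, n ≤ m → c ≤ m → ψ n c ≤ φ m := by
    intro m n c hn hc
    have h1 : ψ n c ≤ ∑ c ∈ Finset.range (m+1), ψ n c :=
      Finset.single_le_sum (f := fun c => ψ n c) (fun _ _ => Nat.zero_le _) (by simp; omega)
    have h2 : ∑ c ∈ Finset.range (m+1), ψ n c ≤ φ m :=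
      Finset.single_le_sum (f := fun n => ∑ c ∈ Finset.range (m+1), ψ n c)
        (fun _ _ => Nat.zero_le _) (by simp; omega)
    exact h1.trans h2
  obtain ⟨h, hh, hinf⟩ := hF (fun m => φ (φ m))
  have hX := infinite_good h φ hφ hinf
  obtain ⟨f, hf, hinf'⟩ := Phi_spec hF
    (fun i => Encodable.encode ((List.range (M h i + 1)).map (ψ i))) _ hX
  refine ⟨h, hh, f, hf, hinf'.mono ?_⟩
  rintro i ⟨hi, hfi⟩
  simp only [mem_ofPred_eq] at hi hfi ⊢
  have hp := pos_le h (Phi f) i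
  have hval : (dl (Phi f i)).getD (pos h (Phi f) i) 0 = ψ i (pos h (Phi f) i) := by
    rw [hfi]
    have : pos h (Phi f) i < M h i + 1 := by omega
    simp [dl, List.getD_eq_getElem?_getD, this]
  have hpos : pos h (Phi f) (i+1) = ψ i (pos h (Phi f) i) := by
    rw [pos, hval, if_pos]
    exact ⟨(hψφ _ _ _ (le_M h i) hp).trans hi, hψ1 _ _⟩
  have := lim_mem h (Phi f) (i+1)
  rw [hpos] at this
  exact hψ2 _ _ this

theorem main {F : Set (ℕ → ℕ)} (hF : InfEq F) :
    ¬ IsMeagre (range fun p : F × F => lim p.1 (Phi p.2)) := by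
  intro hm
  rw [IsMeagre, mem_residual_iff] at hm
  obtain ⟨S, hSo, hSd, hSc, hS⟩ := hm
  obtain ⟨U, hU⟩ := (hSc.insert Set.univ).exists_eq_range (insert_nonempty _ _)
  have hUo : ∀ n, IsOpen (U n) := by
    intro n
    have : U n ∈ insert Set.univ S := hU ▸ mem_range_self n
    rcases this with h | h
    · rw [h]; exact isOpen_univ
    · exact hSo _ h
  have hUd : ∀ n, Dense (U n) := by
    intro n
    have : U n ∈ insert Set.univ S := hU ▸ mem_range_self n
    rcases this with h | h
    · rw [h]; exact dense_univ
    · exact hSd _ h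
  obtain ⟨h, hh, f, hf, hinf⟩ := main_aux hF (fun n => ⋂ j ∈ Finset.range (n+1), U j)
    (fun n => isOpen_biInter_finset fun j _ => hUo j)
    (fun n => by
      have := dense_biInter_of_isOpen (S := (Finset.range (n+1) : Set ℕ)) (f := U)
        (fun j _ => hUo j) (Finset.countable_toSet _) (fun j _ => hUd j)
      simpa using this)
  have : lim h (Phi f) ∈ ⋂₀ S := by
    intro t ht
    have : t ∈ range U := hU ▸ mem_insert_of_mem _ ht
    obtain ⟨n, rfl⟩ := this
    obtain ⟨i, hi, hni⟩ := hinf.exists_gt n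
    simp only [mem_ofPred_eq, mem_iInter] at hi
    exact hi n (by simp; omega)
  exact hS this ⟨(⟨h, hh⟩, ⟨f, hf⟩), rfl⟩

theorem infEq_of_not_meagre {S : Set (ℕ → ℕ)} (hS : ¬ IsMeagre S) : InfEq S := by
  intro g
  by_contra hcon
  push Not at hcon
  apply hS
  have hres : (⋂ n : ℕ, {f : ℕ → ℕ | ∃ k > n, f k = g k}) ∈ residual (ℕ → ℕ) := by
    refine countable_iInter_mem.2 fun n => residual_of_dense_open ?_ ?_
    · have : {f : ℕ → ℕ | ∃ k > n, f k = g k} = ⋃ k > n, {f : ℕ → ℕ | f k = g k} := by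
        ext; simp
      rw [this]
      refine isOpen_biUnion fun k _ => ?_
      exact (isOpen_discrete ({g k} : Set ℕ)).preimage (continuous_apply (A := fun _ : ℕ => ℕ) k)
    · intro x
      rw [mem_closure_iff]
      intro o ho hx
      obtain ⟨I, u, hu, hI⟩ := isOpen_pi_iff.1 ho x hx
      let k := max (n + 1) (I.sup id + 1)
      refine ⟨Function.update x k (g k), hI fun j hj => ?_, k, ?_, by simp⟩
      · have h1 : id j ≤ I.sup id := Finset.le_sup (f := id) hj
        have h2 : I.sup id + 1 ≤ k := le_max_right _ _
        have : j ≠ k := by simp only [id] at h1; omega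
        rw [Function.update_of_ne this]
        exact (hu j hj).2
      · have : n + 1 ≤ k := le_max_left _ _
        exact this
  refine Filter.mem_of_superset hres ?_
  intro f hf hfS
  refine (Set.not_infinite.2 (hcon f hfS) : ¬ _) ?_
  rw [Set.infinite_iff_exists_gt]
  intro a
  obtain ⟨k, hk, hk'⟩ := mem_iInter.1 hf a
  exact ⟨k, hk', hk⟩

end NonM

/-- b_≂ = non(M) on Baire space. -/
theorem stmt3 :
    sInf {c : Cardinal | ∃ F : Set (ℕ → ℕ), #F = c ∧
        ∀ g : ℕ → ℕ, ∃ f ∈ F, {k : ℕ | f k = g k}.Infinite} =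
      sInf {c : Cardinal | ∃ S : Set (ℕ → ℕ), #S = c ∧ ¬ IsMeagre S} := by
  have key : ∀ F : Set (ℕ → ℕ), NonM.InfEq F →
      ∃ S : Set (ℕ → ℕ), #S ≤ #F ∧ ¬ IsMeagre S := by
    intro F hF
    refine ⟨_, ?_, NonM.main hF⟩
    refine mk_range_le.trans ?_
    have : Infinite F := hF.infinite.to_subtype
    rw [mk_prod, lift_id, mul_eq_self (aleph0_le_mk F)]
  have huniv : NonM.InfEq Set.univ := fun g => ⟨g, mem_univ _, by simpa using Set.infinite_univ⟩
  apply le_antisymm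
  · obtain ⟨S, _, hS⟩ := key _ huniv
    refine le_csInf ⟨_, S, rfl, hS⟩ ?_
    rintro c ⟨S, rfl, hS⟩
    exact csInf_le' ⟨S, rfl, NonM.infEq_of_not_meagre hS⟩
  · refine le_csInf ⟨_, Set.univ, rfl, huniv⟩ ?_
    rintro c ⟨F, rfl, hF⟩
    obtain ⟨S, hle, hS⟩ := key F hF
    refine le_trans (csInf_le' ?_) hle
    exact ⟨S, rfl, hS⟩
end

section
/- The least cardinality of a family D ⊆ ω^ω such that for every f ∈ ω^ω there exists g ∈ D with f(k) ≠ g(k) for all but finitely many k equals cov(M), the least cardinality of a family of meager subsets of ω^ω whose union is all of ω^ω. (In the paper's notation: d_≂ = cov(M), where f ≂ g iff f(k) ≠ g(k) for all but finitely many k.) -/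
open Cardinal Set Filter

/-- Every `ι`-indexed family of reals has a common infinitely-often-equal real. -/
def IOE (ι : Type) : Prop :=
  ∀ F : ι → ℕ → ℕ, ∃ g : ℕ → ℕ, ∀ i, ∃ᶠ n in atTop, F i n = g n

lemma IOE.countable {ι : Type} (P : IOE ι) {α : Type} [Countable α] [Nonempty α]
    (F : ι → ℕ → α) : ∃ g : ℕ → α, ∀ i, ∃ᶠ n in atTop, F i n = g n := by
  obtain ⟨e, he⟩ := exists_injective_nat α
  obtain ⟨g, hg⟩ := P (fun i n => e (F i n))
  refine ⟨fun n => Function.invFun e (g n), fun i => (hg i).mono fun n hn => ?_⟩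
  show F i n = Function.invFun e (g n)
  rw [← hn]
  exact (Function.leftInverse_invFun he _).symm

lemma IOE.infinite {ι : Type} (P : IOE ι) {α : Type} [Countable α] [Nonempty α]
    (F : ι → ℕ → α) (X : ι → Set ℕ) (hX : ∀ i, ∃ᶠ n in atTop, n ∈ X i) :
    ∃ g : ℕ → α, ∀ i, ∃ᶠ n in atTop, n ∈ X i ∧ F i n = g n := by
  classical
  have hT : ∀ i n, ∃ T : Finset ℕ, (T : Set ℕ) ⊆ X i ∩ Ici n ∧ T.card = n + 1 := by
    intro i n
    apply Set.Infinite.exists_subset_card_eq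
    apply Nat.frequently_atTop_iff_infinite.1
    exact (hX i).and_eventually (eventually_ge_atTop n)
  choose T hTs hTc using hT
  obtain ⟨G, hG⟩ := P.countable (fun i n => (T i n).image (fun k => (k, F i k)))
  let step : ℕ → Finset (ℕ × α) → Finset (ℕ × α) := fun n c =>
    if h : ∃ e ∈ G n, e.1 ∉ c.image Prod.fst then insert h.choose c else c
  let c : ℕ → Finset (ℕ × α) := fun n => Nat.rec ∅ step n
  have cs : ∀ n, c (n+1) = step n (c n) := fun n => rfl
  have ccard : ∀ n, (c n).card ≤ n := by
    intro n
    induction n with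
    | zero => simp [c]
    | succ n ih =>
      rw [cs]
      simp only [step]
      split_ifs with h
      · exact (Finset.card_insert_le _ _).trans (by omega)
      · omega
  have cmono : Monotone c := by
    apply monotone_nat_of_le_succ
    intro n
    rw [cs]
    simp only [step]
    split_ifs with h
    · exact Finset.subset_insert _ _
    · exact le_rfl
  have cfun : ∀ n, ∀ k a b, (k, a) ∈ c n → (k, b) ∈ c n → a = b := by
    intro n
    induction n with
    | zero => simp [c]
    | succ n ih =>
      intro k a b
      rw [cs]
      simp only [step]
      split_ifs with h
      · have h2 := h.choose_spec.2
        generalize h.choose = e at h2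
        obtain ⟨e1, e2⟩ := e
        simp only [Finset.mem_image, not_exists, not_and, Prod.forall] at h2
        simp only [Finset.mem_insert, Prod.mk.injEq]
        rintro (⟨rfl, rfl⟩ | h3) (⟨h4, rfl⟩ | h4)
        · rfl
        · exact absurd rfl (h2 _ _ h4)
        · subst h4; exact absurd rfl (h2 _ _ h3)
        · exact ih _ _ _ h3 h4
      · exact ih _ _ _
  let g : ℕ → α := fun k => 
    @dite α (∃ a : α, ∃ n : ℕ, (k, a) ∈ c n) (Classical.dec _) (fun h => h.choose)
      (fun _ => Classical.arbitrary α)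
  have hg : ∀ n k a, (k, a) ∈ c n → g k = a := by
    intro n k a hk
    have h : ∃ a, ∃ n, (k, a) ∈ c n := ⟨a, n, hk⟩
    simp only [g, dif_pos h]
    obtain ⟨m, hm⟩ := h.choose_spec
    exact cfun (max m n) _ _ _ (cmono (le_max_left _ _) hm) (cmono (le_max_right _ _) hk)
  refine ⟨g, fun i => ?_⟩
  rw [frequently_atTop]
  intro N
  obtain ⟨n, hn, hGn⟩ := frequently_atTop.1 (hG i) N
  have h : ∃ e ∈ G n, e.1 ∉ (c n).image Prod.fst := by
    have : ((c n).image Prod.fst).card < (T i n).card := by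
      rw [hTc]
      exact Nat.lt_succ_of_le (Finset.card_image_le.trans (ccard n))
    obtain ⟨k, hk, hk'⟩ := Finset.exists_mem_notMem_of_card_lt_card this
    refine ⟨(k, F i k), ?_, hk'⟩
    rw [← hGn]
    exact Finset.mem_image_of_mem _ hk
  have hc : h.choose ∈ c (n+1) := by
    rw [cs]
    simp only [step, dif_pos h]
    exact Finset.mem_insert_self _ _
  have h1 := h.choose_spec.1
  generalize h.choose = e at hc h1
  rw [← hGn] at h1
  obtain ⟨k, hk, rfl⟩ := Finset.mem_image.1 h1
  have := hTs i n hk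
  exact ⟨k, le_trans hn this.2, this.1, (hg (n+1) _ _ hc).symm⟩

lemma IOE.unbounded {ι : Type} (P : IOE ι) (h : ι → ℕ → ℕ) (hm : ∀ i, Monotone (h i)) :
    ∃ b : ℕ → ℕ, StrictMono b ∧ ∀ i, ∃ᶠ n in atTop, h i (b n) ≤ b (n+1) := by
  obtain ⟨H0, hH0⟩ := P (fun i n => h i (h i n))
  let H : ℕ → ℕ := fun n => (Finset.range (n+1)).sup H0 + n + 1
  have Hmono : Monotone H := by
    intro a b hab
    have : (Finset.range (a+1)).sup H0 ≤ (Finset.range (b+1)).sup H0 :=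
      Finset.sup_mono (by intro x; simp; omega)
    simp only [H]; omega
  have hH : ∀ n, H0 n ≤ H n := by
    intro n
    have : H0 n ≤ (Finset.range (n+1)).sup H0 := Finset.le_sup (f := H0) (by simp)
    simp only [H]; omega
  let b : ℕ → ℕ := fun n => Nat.rec 0 (fun _ x => H x) n
  have bs : ∀ n, b (n+1) = H (b n) := fun n => rfl
  have bmono : StrictMono b := by
    apply strictMono_nat_of_lt_succ
    intro n; rw [bs]; simp only [H]; omega
  refine ⟨b, bmono, fun i => ?_⟩
  rw [frequently_atTop]
  intro N
  obtain ⟨n, hn, hGn⟩ := frequently_atTop.1 (hH0 i) (b N)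
  have hex : ∃ k, n < b (k+1) := ⟨n, lt_of_lt_of_le (Nat.lt_succ_self n) (bmono.id_le _)⟩
  classical
  obtain ⟨k, hk1, hk2⟩ : ∃ k, b k ≤ n ∧ n < b (k+1) := by
    refine ⟨Nat.find hex, ?_, Nat.find_spec hex⟩
    rcases hf : Nat.find hex with _ | j
    · exact Nat.zero_le _
    · have := Nat.find_min hex (m := j) (by omega)
      omega
  have hNk : N ≤ k := by
    have : b N < b (k+1) := lt_of_le_of_lt hn hk2
    by_contra hlt
    have h1 : k + 1 ≤ N := by omega
    have h2 : b (k+1) ≤ b N := bmono.monotone h1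
    omega
  by_cases hc : h i (b k) ≤ b (k+1)
  · exact ⟨k, hNk, hc⟩
  · refine ⟨k+1, by omega, ?_⟩
    calc h i (b (k+1)) ≤ h i (h i n) := hm i ((not_le.1 hc).le.trans (hm i hk1))
      _ = H0 n := hGn
      _ ≤ H n := hH n
      _ ≤ H (b (k+1)) := Hmono hk2.le
      _ = b (k+1+1) := rfl

lemma IOE.core {ι : Type} (P : IOE ι) (R : ℕ → ℕ → Prop) (hR : ∀ q, R q q)
    (d : ι → ℕ → ℕ → ℕ) (hd : ∀ i m q, R q (d i m q)) :
    ∃ p : ℕ → ℕ, (∀ n, R (p n) (p (n+1))) ∧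
      ∀ i, ∃ᶠ m in atTop, ∃ n, p (n+1) = d i m (p n) := by
  classical
  let h : ι → ℕ → ℕ := fun i m =>
    (Finset.range (m+1)).sup fun m' => (Finset.range (m'+1)).sup fun q => d i m' q
  have hmono : ∀ i, Monotone (h i) := fun i a b hab =>
    Finset.sup_mono (by intro x; simp; omega)
  have hle : ∀ i m q, q ≤ m → d i m q ≤ h i m := by
    intro i m q hq
    have h1 : d i m q ≤ (Finset.range (m+1)).sup fun q => d i m q :=
      Finset.le_sup (f := fun q => d i m q) (by simp; omega)
    have h2 : ((Finset.range (m+1)).sup fun q => d i m q) ≤ h i m :=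
      Finset.le_sup (f := fun m' => (Finset.range (m'+1)).sup fun q => d i m' q) (by simp)
    exact h1.trans h2
  obtain ⟨b, bmono, hb⟩ := P.unbounded h hmono
  obtain ⟨g, hg⟩ := P.infinite (fun i n => (List.range (b n + 1)).map (d i (b n)))
    (fun i => {n | h i (b n) ≤ b (n+1)}) hb
  let step : ℕ → ℕ → ℕ := fun n q =>
    if R q ((g n).getD q 0) ∧ (g n).getD q 0 ≤ b (n+1) then (g n).getD q 0 else q
  let p : ℕ → ℕ := fun n => Nat.rec 0 step n
  have ps : ∀ n, p (n+1) = step n (p n) := fun n => rfl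
  have pb : ∀ n, p n ≤ b n := by
    intro n
    induction n with
    | zero => exact Nat.zero_le _
    | succ n ih =>
      rw [ps]
      simp only [step]
      split_ifs with hc
      · exact hc.2
      · exact ih.trans (bmono.monotone (Nat.le_succ n))
  refine ⟨p, fun n => ?_, fun i => ?_⟩
  · rw [ps]
    simp only [step]
    split_ifs with hc
    · exact hc.1
    · exact hR _
  · rw [frequently_atTop]
    intro N
    obtain ⟨n, hn, hX, hgn⟩ := frequently_atTop.1 (hg i) N
    refine ⟨b n, le_trans hn (bmono.id_le n), n, ?_⟩
    have hq : (g n).getD (p n) 0 = d i (b n) (p n) := by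
      rw [← hgn]
      have := pb n
      simp [List.getD, Nat.lt_succ_of_le this]
    rw [ps]
    simp only [step, hq]
    rw [if_pos ⟨hd _ _ _, (hle _ _ _ (pb n)).trans hX⟩]

/-- The basic open set of a finite sequence. -/
def cyl (s : List ℕ) : Set (ℕ → ℕ) := {x | ∀ k a, s[k]? = some a → x k = a}

lemma isOpen_nbhd {V : Set (ℕ → ℕ)} (hV : IsOpen V) {x : ℕ → ℕ} (hx : x ∈ V) :
    ∃ N, ∀ y : ℕ → ℕ, (∀ k < N, y k = x k) → y ∈ V := by
  obtain ⟨I, u, hu, hs⟩ := isOpen_pi_iff.1 hV x hx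
  refine ⟨I.sup id + 1, fun y hy => hs ?_⟩
  intro k hk
  have : k ≤ I.sup id := Finset.le_sup (f := id) hk
  rw [hy k (by omega)]
  exact (hu k hk).2

lemma cyl_open (s : List ℕ) : IsOpen (cyl s) := by
  have : cyl s = ⋂ k ∈ Set.Iio s.length, {x | ∀ a, s[k]? = some a → x k = a} := by
    ext x
    simp only [cyl, mem_ofPred_eq, mem_iInter, mem_Iio]
    constructor
    · intro h k _; exact h k
    · intro h k a hk
      exact h k (by
        by_contra hc
        rw [List.getElem?_eq_none (by omega)] at hk
        simp at hk) a hk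
  rw [this]
  refine (Set.finite_Iio _).isOpen_biInter fun k _ => ?_
  have hc : Continuous (fun x : ℕ → ℕ => x k) := continuous_apply k
  exact (isOpen_discrete {n : ℕ | ∀ a, s[k]? = some a → n = a}).preimage hc

lemma cyl_nonempty (s : List ℕ) : (cyl s).Nonempty :=
  ⟨fun k => s.getD k 0, fun k a h => by simp [List.getD, h]⟩

lemma exists_ext {V : Set (ℕ → ℕ)} (hV : IsOpen V) (hd : Dense V) (s : List ℕ) :
    ∃ t, s <+: t ∧ cyl t ⊆ V := by
  obtain ⟨x, hxs, hxV⟩ := hd.inter_open_nonempty _ (cyl_open s) (cyl_nonempty s)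
  obtain ⟨N, hN⟩ := isOpen_nbhd hV hxV
  refine ⟨(List.range (max N s.length)).map x, ?_, ?_⟩
  · rw [List.prefix_iff_getElem?]
    intro i hi
    have := hxs i s[i] (by simp [hi])
    simp [hi, this]
  · intro y hy
    apply hN
    intro k hk
    apply hy
    simp [hk]

lemma cover_fails (𝒜 : Set (Set (ℕ → ℕ))) (P : IOE 𝒜) (hA : ∀ A ∈ 𝒜, IsMeagre A) :
    ⋃₀ 𝒜 ≠ Set.univ := by
  classical
  have hU : ∀ A : 𝒜, ∃ V : ℕ → Set (ℕ → ℕ), (∀ m, IsOpen (V m)) ∧ (∀ m, Dense (V m)) ∧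
      ∀ x, (∃ᶠ m in atTop, x ∈ V m) → x ∉ A.1 := by
    intro A
    have := hA A.1 A.2
    rw [IsMeagre, mem_residual_iff] at this
    obtain ⟨S, hSo, hSd, hSc, hSA⟩ := this
    obtain ⟨U, hU⟩ := (hSc.insert Set.univ).exists_eq_range (insert_nonempty _ _)
    have hUo : ∀ m, IsOpen (U m) ∧ Dense (U m) := by
      intro m
      have : U m ∈ insert Set.univ S := hU ▸ mem_range_self m
      rcases this with h | h
      · rw [h]; exact ⟨isOpen_univ, dense_univ⟩
      · exact ⟨hSo _ h, hSd _ h⟩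
    refine ⟨fun m => ⋂ k ∈ Set.Iic m, U k, fun m => ?_, fun m => ?_, fun x hx => ?_⟩
    · exact (Set.finite_Iic m).isOpen_biInter fun k _ => (hUo k).1
    · exact dense_biInter_of_isOpen (fun k _ => (hUo k).1) (Set.to_countable _)
        (fun k _ => (hUo k).2)
    · apply hSA
      intro t ht
      have : t ∈ range U := hU ▸ mem_insert_of_mem _ ht
      obtain ⟨k, rfl⟩ := this
      obtain ⟨m, hm, hxm⟩ := frequently_atTop.1 hx k
      exact mem_iInter₂.1 hxm k hm
  choose V hVo hVd hV using hU
  choose e he1 he2 using fun A m s => exists_ext (hVo A m) (hVd A m) s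
  let dec : ℕ → List ℕ := Denumerable.ofNat (List ℕ)
  obtain ⟨p, hp, hpd⟩ := P.core (fun q q' => dec q <+: dec q') (fun q => List.prefix_rfl)
    (fun A m q => Encodable.encode (e A m (dec q))) (by
      intro A m q
      simp only [dec, Denumerable.ofNat_encode]
      exact he1 _ _ _)
  have hpm : ∀ m n, m ≤ n → dec (p m) <+: dec (p n) := by
    intro m n hmn
    induction hmn with
    | refl => exact List.prefix_rfl
    | step _ ih => exact ih.trans (hp _)
  have hget : ∀ s t : List ℕ, s <+: t → ∀ (k : ℕ) (a : ℕ), s[k]? = some a → t[k]? = some a := by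
    rintro s t ⟨r, rfl⟩ k a hk
    have : k < s.length := (List.getElem?_eq_some_iff.1 hk).1
    rw [List.getElem?_append_left this, hk]
  obtain ⟨x, hx⟩ : ∃ x, ∀ n, x ∈ cyl (dec (p n)) := by
    refine ⟨fun k => if h : ∃ a, ∃ n, (dec (p n))[k]? = some a then h.choose else 0, ?_⟩
    intro n k a hk
    have h : ∃ a, ∃ n, (dec (p n))[k]? = some a := ⟨a, n, hk⟩
    simp only [dif_pos h]
    obtain ⟨m, hm⟩ := h.choose_spec
    have h1 := hget _ _ (hpm m (max m n) (le_max_left _ _)) _ _ hm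
    have h2 := hget _ _ (hpm n (max m n) (le_max_right _ _)) _ _ hk
    exact Option.some.inj (h1.symm.trans h2)
  intro hcov
  have : x ∈ ⋃₀ 𝒜 := hcov ▸ mem_univ x
  obtain ⟨A, hAm, hxA⟩ := this
  refine hV ⟨A, hAm⟩ x ((hpd ⟨A, hAm⟩).mono ?_) hxA
  rintro m ⟨n, hn⟩
  apply he2 ⟨A, hAm⟩ m (dec (p n))
  have := hx (n+1)
  rw [hn] at this
  simpa only [dec, Denumerable.ofNat_encode] using this

lemma meagre_evDiff (g : ℕ → ℕ) : IsMeagre {f : ℕ → ℕ | ∀ᶠ k in atTop, f k ≠ g k} := by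
  have h : ∀ N, {f : ℕ → ℕ | ∃ k ≥ N, f k = g k} ∈ residual (ℕ → ℕ) := by
    intro N
    apply residual_of_dense_open
    · have : {f : ℕ → ℕ | ∃ k ≥ N, f k = g k} = ⋃ k ∈ Ici N, (fun f : ℕ → ℕ => f k) ⁻¹' {g k} := by
        ext f; simp
      rw [this]
      exact isOpen_biUnion fun k _ => (isOpen_discrete _).preimage (continuous_apply k)
    · rw [dense_iff_inter_open]
      rintro W hW ⟨x, hx⟩
      obtain ⟨M, hM⟩ := isOpen_nbhd hW hx
      refine ⟨fun k => if k < M then x k else g k, hM _ fun k hk => by simp [hk], max M N,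
        le_max_right _ _, by simp⟩
  rw [IsMeagre]
  refine mem_of_superset (countable_iInter_mem.2 h) ?_
  intro f hf
  rw [mem_iInter] at hf
  simp only [mem_compl_iff, mem_ofPred_eq, eventually_atTop, not_exists, not_forall]
  intro N
  obtain ⟨k, hk, hk2⟩ := hf N
  exact ⟨k, hk, by simpa using hk2⟩

/-- d_≂ = cov(M) on Baire space. -/
theorem stmt4 :
    sInf {c : Cardinal | ∃ D : Set (ℕ → ℕ), #D = c ∧
        ∀ f : ℕ → ℕ, ∃ g ∈ D, ∀ᶠ k in atTop, f k ≠ g k} =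
      sInf {c : Cardinal | ∃ 𝒜 : Set (Set (ℕ → ℕ)), #𝒜 = c ∧
        (∀ A ∈ 𝒜, IsMeagre A) ∧ ⋃₀ 𝒜 = Set.univ} := by
  have key : ∀ D : Set (ℕ → ℕ), (∀ f : ℕ → ℕ, ∃ g ∈ D, ∀ᶠ k in atTop, f k ≠ g k) →
      ∃ 𝒜 : Set (Set (ℕ → ℕ)), #𝒜 ≤ #D ∧ (∀ A ∈ 𝒜, IsMeagre A) ∧ ⋃₀ 𝒜 = Set.univ := by
    intro D hD
    refine ⟨(fun g => {f : ℕ → ℕ | ∀ᶠ k in atTop, f k ≠ g k}) '' D, mk_image_le, ?_, ?_⟩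
    · rintro _ ⟨g, _, rfl⟩
      exact meagre_evDiff g
    · rw [eq_univ_iff_forall]
      intro f
      obtain ⟨g, hg, hf⟩ := hD f
      exact ⟨_, ⟨g, hg, rfl⟩, hf⟩
  have huniv : ∀ f : ℕ → ℕ, ∃ g ∈ (univ : Set (ℕ → ℕ)), ∀ᶠ k in atTop, f k ≠ g k :=
    fun f => ⟨fun k => f k + 1, mem_univ _, Eventually.of_forall fun k => by simp⟩
  apply le_antisymm
  · refine le_csInf ?_ ?_
    · obtain ⟨𝒜, _, h⟩ := key univ huniv
      exact ⟨_, 𝒜, rfl, h⟩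
    · rintro _ ⟨𝒜, rfl, hA, hcov⟩
      by_contra hlt
      rw [not_le] at hlt
      refine cover_fails 𝒜 ?_ hA hcov
      intro F
      by_contra hno
      push Not at hno
      refine absurd (lt_of_le_of_lt (mk_range_le (f := F)) hlt) (not_lt.2 (csInf_le' ?_))
      refine ⟨range F, rfl, fun f => ?_⟩
      obtain ⟨i, hi⟩ := hno f
      refine ⟨F i, mem_range_self i, ?_⟩
      simpa [Filter.Frequently, eq_comm] using hi
  · refine le_csInf ⟨_, univ, rfl, huniv⟩ ?_
    rintro _ ⟨D, rfl, hD⟩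
    obtain ⟨𝒜, hle, h⟩ := key D hD
    exact le_trans (csInf_le' (by exact ⟨𝒜, rfl, h⟩)) hle
end

section
/- add(N) equals the least cardinality of a family F ⊆ ω^ω such that there is no single slalom φ with f(n) ∈ φ(n) for all but finitely many n for every f ∈ F. Here add(N) is the least cardinality of a family of null subsets of 2^ω whose union is not null. (In the paper's notation: b_{⊆*} = add(N).) -/
open Filter Set MeasureTheory Cardinal

/-- A slalom: φ : ℕ → Finset ℕ with |φ(n)| ≤ (n+1)^k for all n, for some fixed k. -/
def IsSlalom (φ : ℕ → Finset ℕ) : Prop := ∃ k : ℕ, ∀ n : ℕ, (φ n).card ≤ (n + 1) ^ k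

/-- A measure on Cantor space is the fair-coin product measure iff it is a probability
measure giving each cylinder determined by finitely many coordinates its fair value. -/
def IsFairCoin (μ : Measure (ℕ → Bool)) : Prop :=
  IsProbabilityMeasure μ ∧
  ∀ (s : Finset ℕ) (σ : ℕ → Bool),
    μ {f : ℕ → Bool | ∀ i ∈ s, f i = σ i} = (1 / 2 : ENNReal) ^ s.card

section null_to_fun

variable {X : Type*} [TopologicalSpace X] [SecondCountableTopology X] [MeasurableSpace X]
  [BorelSpace X]

theorem exists_enum (X : Type*) [TopologicalSpace X] [SecondCountableTopology X]
    [MeasurableSpace X] [BorelSpace X] (μ : Measure X) [μ.OuterRegular] :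
    ∃ e : ℕ → Set X, ∀ A : Set X, μ A = 0 → ∃ f : ℕ → ℕ,
      (∀ n, μ (e (f n)) ≤ (2⁻¹ : ENNReal) ^ n) ∧ ∀ x ∈ A, ∃ᶠ n in atTop, x ∈ e (f n) := by
  set B := TopologicalSpace.countableBasis X with hB
  have hcount : (generateSetAlgebra B).Countable :=
    countable_generateSetAlgebra (TopologicalSpace.countable_countableBasis X)
  have halg := isSetAlgebra_generateSetAlgebra (𝒜 := B)
  have hne : (generateSetAlgebra B).Nonempty := ⟨∅, halg.empty_mem⟩
  obtain ⟨e, he⟩ := hcount.exists_eq_range hne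
  refine ⟨e, fun A hA => ?_⟩
  have hmeas : ∀ s ∈ generateSetAlgebra B, MeasurableSet s := by
    intro s hs
    induction hs with
    | base s hs => exact (TopologicalSpace.isOpen_of_mem_countableBasis hs).measurableSet
    | empty => exact MeasurableSet.empty
    | compl s _ ih => exact ih.compl
    | union s t _ _ h1 h2 => exact h1.union h2
  have h1 : ∀ j : ℕ, ∃ U, U ⊇ A ∧ IsOpen U ∧ μ U < (2⁻¹ : ENNReal) ^ j := by
    intro j
    apply A.exists_isOpen_lt_of_lt
    rw [hA]
    exact ENNReal.pow_pos (by simp) _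
  choose U hAU hUo hU using h1
  have h2 : ∀ j : ℕ, ∃ s : ℕ → Set X, (∀ i, s i ∈ generateSetAlgebra B) ∧ ⋃ i, s i = U j := by
    intro j
    obtain ⟨S, hSB, hS⟩ := (TopologicalSpace.isBasis_countableBasis X).open_eq_sUnion (hUo j)
    have hSc : (insert ∅ S).Countable :=
      ((TopologicalSpace.countable_countableBasis X).mono hSB).insert _
    obtain ⟨s, hs⟩ := hSc.exists_eq_range ⟨∅, mem_insert _ _⟩
    refine ⟨s, fun i => ?_, ?_⟩
    · have : s i ∈ insert ∅ S := hs ▸ mem_range_self i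
      rcases this with h | h
      · rw [h]; exact halg.empty_mem
      · exact self_subset_generateSetAlgebra (hSB h)
    · rw [← sUnion_range, ← hs, hS]; simp
  choose s hs hsU using h2
  let E : ℕ → Set X := fun p => disjointed (s p.unpair.1) p.unpair.2
  have hE : ∀ p, E p ∈ generateSetAlgebra B := fun p =>
    halg.isSetRing.disjointed_mem (hs _) _
  have hsum : ∑' p, μ (E p) ≠ ⊤ := by
    have : ∑' p, μ (E p) = ∑' j, μ (U j) := by
      rw [← Nat.pairEquiv.tsum_eq, ENNReal.tsum_prod']
      congr 1; ext j
      rw [← hsU j, ← iUnion_disjointed, measure_iUnion (disjoint_disjointed _)]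
      · simp [E]
      · intro i; exact hmeas _ (halg.isSetRing.disjointed_mem (hs _) _)
    rw [this]
    refine ne_top_of_le_ne_top ?_ (ENNReal.tsum_le_tsum fun j => (hU j).le)
    rw [ENNReal.tsum_geometric]
    simp
  have htail := ENNReal.tendsto_sum_nat_add _ hsum
  obtain ⟨m, hm, hmt⟩ := Filter.extraction_forall_of_eventually
    (P := fun n k => ∑' i, μ (E (i + k)) < (2⁻¹ : ENNReal) ^ n)
    (fun n => htail.eventually_lt_const (ENNReal.pow_pos (by simp) _))
  have hC : ∀ n, ∃ k, e k = ⋃ i ∈ Finset.Ico (m n) (m (n + 1)), E i := by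
    intro n
    have : (⋃ i ∈ Finset.Ico (m n) (m (n + 1)), E i) ∈ generateSetAlgebra B :=
      halg.biUnion_mem _ (fun i _ => hE i)
    rw [he] at this
    exact this
  choose f hf using hC
  refine ⟨f, fun n => ?_, fun x hx => ?_⟩
  · rw [hf]
    refine (measure_biUnion_finset_le _ _).trans ((?_ : _ ≤ _).trans (hmt n).le)
    rw [Finset.sum_Ico_eq_sum_range]
    simp_rw [add_comm (m n)]
    exact ENNReal.sum_le_tsum _
  · have hinf : ∃ᶠ p in atTop, x ∈ E p := by
      rw [Nat.frequently_atTop_iff_infinite]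
      have : ∀ j, ∃ i, x ∈ disjointed (s j) i := by
        intro j
        have := hAU j hx
        rw [← hsU j, ← iUnion_disjointed] at this
        exact mem_iUnion.1 this
      choose i hi using this
      refine Set.infinite_of_injective_forall_mem (f := fun j => Nat.pair j (i j)) ?_ ?_
      · intro a b hab
        exact (Nat.pair_eq_pair.1 hab).1
      · intro j
        simpa [E] using hi j
    rw [frequently_atTop] at hinf ⊢
    intro N
    obtain ⟨p, hp, hxp⟩ := hinf (m N)
    have hex : ∃ k, p < m k := ⟨p + 1, hm.le_apply⟩
    have hk := Nat.find_spec hex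
    have hkN : N < Nat.find hex := hm.lt_iff_lt.1 (hp.trans_lt hk)
    obtain ⟨n, hn⟩ : ∃ n, Nat.find hex = n + 1 := ⟨Nat.find hex - 1, by omega⟩
    have hn' : ¬ p < m n := Nat.find_min hex (by omega)
    refine ⟨n, by omega, ?_⟩
    rw [hf]
    simp only [mem_iUnion, Finset.mem_Ico]
    exact ⟨p, ⟨not_lt.1 hn', hn ▸ hk⟩, hxp⟩

theorem D2 (X : Type) [TopologicalSpace X] [SecondCountableTopology X]
    [MeasurableSpace X] [BorelSpace X] (μ : Measure X) [μ.OuterRegular]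
    (𝒜 : Set (Set X)) (h0 : ∀ A ∈ 𝒜, μ A = 0) (h1 : μ (⋃₀ 𝒜) ≠ 0) :
    ∃ F : Set (ℕ → ℕ), #F ≤ #𝒜 ∧
      ¬ ∃ φ : ℕ → Finset ℕ, IsSlalom φ ∧ ∀ f ∈ F, ∀ᶠ n in atTop, f n ∈ φ n := by
  obtain ⟨e, he⟩ := exists_enum X μ
  choose! Φ hΦ hΦ' using he
  refine ⟨Φ '' 𝒜, mk_image_le, ?_⟩
  rintro ⟨φ, ⟨k, hk⟩, hφ⟩
  apply h1
  classical
  let D : ℕ → Set X := fun n =>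
    ⋃ i ∈ (φ n).filter (fun i => μ (e i) ≤ (2⁻¹ : ENNReal) ^ n), e i
  have hD : ∀ n, μ (D n) ≤ ENNReal.ofReal (((n + 1 : ℕ) : ℝ) ^ k * (2⁻¹ : ℝ) ^ n) := by
    intro n
    refine (measure_biUnion_finset_le _ _).trans ?_
    refine (Finset.sum_le_card_nsmul _ _ ((2⁻¹ : ENNReal) ^ n) ?_).trans ?_
    · intro i hi; exact (Finset.mem_filter.1 hi).2
    · rw [nsmul_eq_mul, ENNReal.ofReal_mul (by positivity), ENNReal.ofReal_pow (by positivity),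
        ENNReal.ofReal_pow (by positivity), ENNReal.ofReal_natCast,
        ENNReal.ofReal_inv_of_pos (by norm_num), ENNReal.ofReal_ofNat]
      gcongr
      exact_mod_cast (Finset.card_filter_le _ _).trans (hk n)
  have hsum : ∑' n, μ (D n) ≠ ⊤ := by
    refine ne_top_of_le_ne_top ?_ (ENNReal.tsum_le_tsum hD)
    have hs : Summable (fun n : ℕ => ((n + 1 : ℕ) : ℝ) ^ k * (2⁻¹ : ℝ) ^ n) := by
      have := summable_pow_mul_geometric_of_norm_lt_one k (r := (2⁻¹ : ℝ)) (by norm_num)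
      have := ((summable_nat_add_iff 1).2 this).mul_left 2
      refine this.congr fun n => ?_
      rw [pow_succ]; push_cast; ring
    exact hs.tsum_ofReal_ne_top
  refine measure_mono_null ?_ (measure_setOfPred_frequently_eq_zero (p := fun n x => x ∈ D n) hsum)
  rintro x ⟨A, hA, hx⟩
  refine ((hΦ' A (h0 A hA) x hx).and_eventually (hφ _ (mem_image_of_mem _ hA))).mono ?_
  rintro n ⟨h3, h4⟩
  simp only [D, mem_iUnion, Finset.mem_filter]
  exact ⟨_, ⟨h4, hΦ A (h0 A hA) n⟩, h3⟩

end null_to_fun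

section fun_to_null

/-- The block of coordinates used for the pair `(n, i)`. -/
def blk (n i : ℕ) : Finset ℕ :=
  (Finset.range (2 * Nat.log 2 (n + 1))).image (fun t => Nat.pair n (Nat.pair i t))

/-- The independent clopen sets. -/
def Gset (n i : ℕ) : Set (ℕ → Bool) := {x | ∀ j ∈ blk n i, x j = true}

theorem card_blk (n i : ℕ) : (blk n i).card = 2 * Nat.log 2 (n + 1) := by
  rw [blk, Finset.card_image_of_injective, Finset.card_range]
  intro a b h
  exact (Nat.pair_eq_pair.1 (Nat.pair_eq_pair.1 h).2).2

theorem disj_blk (n : ℕ) {i j : ℕ} (h : i ≠ j) : Disjoint (blk n i) (blk n j) := by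
  rw [Finset.disjoint_left]
  intro a ha hb
  simp only [blk, Finset.mem_image] at ha hb
  obtain ⟨t, -, rfl⟩ := ha
  obtain ⟨t', -, h'⟩ := hb
  exact h (Nat.pair_eq_pair.1 (Nat.pair_eq_pair.1 h').2).1.symm

theorem isOpen_Gset (n i : ℕ) : IsOpen (Gset n i) := by
  have : Gset n i = ⋂ j ∈ blk n i, (fun x : ℕ → Bool => x j) ⁻¹' {true} := by
    ext x; simp [Gset]
  rw [this]
  exact isOpen_biInter_finset fun j _ => (isOpen_discrete _).preimage (continuous_apply j)

variable {μ : Measure (ℕ → Bool)}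

theorem meas_Gset (hμ : IsFairCoin μ) (n i : ℕ) :
    μ (Gset n i) = (1 / 2 : ENNReal) ^ (2 * Nat.log 2 (n + 1)) := by
  have := hμ.2 (blk n i) (fun _ => true)
  rwa [card_blk] at this

theorem indep_Gset (hμ : IsFairCoin μ) (n : ℕ) : ProbabilityTheory.iIndepSet (Gset n) μ := by
  rw [ProbabilityTheory.iIndepSet_iff_meas_biInter fun i => (isOpen_Gset n i).measurableSet]
  intro s
  have h1 : (⋂ i ∈ s, Gset n i) = {x | ∀ j ∈ s.biUnion (blk n), x j = true} := by
    ext x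
    simp only [Gset, mem_iInter, mem_ofPred_eq, Finset.mem_biUnion]
    constructor
    · rintro h j ⟨i, hi, hj⟩; exact h i hi j hj
    · intro h i hi j hj; exact h j ⟨i, hi, hj⟩
  rw [h1, hμ.2 _ (fun _ => true), Finset.card_biUnion fun i _ j _ hij => disj_blk n hij]
  rw [← Finset.prod_pow_eq_pow_sum]
  exact Finset.prod_congr rfl fun i _ => by rw [meas_Gset hμ, card_blk]

theorem meas_compl (hμ : IsFairCoin μ) (n : ℕ) (P : Finset ℕ) :
    μ.real (⋂ i ∈ P, (Gset n i)ᶜ) = (1 - (1 / 2 : ℝ) ^ (2 * Nat.log 2 (n + 1))) ^ P.card := by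
  have := hμ.1
  have h := (ProbabilityTheory.iIndepSet_iff _ _).1 (indep_Gset hμ n) P
    (f := fun i => (Gset n i)ᶜ) (fun i _ =>
      (MeasurableSpace.measurableSet_generateFrom (mem_singleton _)).compl)
  rw [measureReal_def, h, ENNReal.toReal_prod, ← Finset.prod_const]
  refine Finset.prod_congr rfl fun i _ => ?_
  rw [← measureReal_def, probReal_compl_eq_one_sub (isOpen_Gset n i).measurableSet,
    measureReal_def, meas_Gset hμ]
  simp

theorem two_pow_le (n : ℕ) : 2 ^ (2 * Nat.log 2 (n + 1)) ≤ (n + 1) ^ 2 := by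
  rw [mul_comm, pow_mul]
  exact Nat.pow_le_pow_left (Nat.pow_log_le_self 2 (by omega)) 2

theorem le_two_pow (n : ℕ) : (n + 1) ^ 2 ≤ 4 * 2 ^ (2 * Nat.log 2 (n + 1)) := by
  have h : n + 1 < 2 ^ (Nat.log 2 (n + 1) + 1) := Nat.lt_pow_succ_log_self (by norm_num) _
  rw [mul_comm 2, pow_mul]
  rw [pow_succ] at h
  nlinarith

theorem Nf_null (hμ : IsFairCoin μ) (f : ℕ → ℕ) :
    μ {x | ∃ᶠ n in atTop, x ∈ Gset n (f n)} = 0 := by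
  apply measure_setOfPred_frequently_eq_zero (p := fun n x => x ∈ Gset n (f n))
  have hle : ∀ n : ℕ, μ {x | x ∈ Gset n (f n)} ≤ ENNReal.ofReal (4 * (1 / ((n + 1 : ℕ) : ℝ) ^ 2)) := by
    intro n
    change μ (Gset n (f n)) ≤ _
    rw [meas_Gset hμ]
    have : (1 / 2 : ENNReal) ^ (2 * Nat.log 2 (n + 1))
        = ENNReal.ofReal ((1 / 2 : ℝ) ^ (2 * Nat.log 2 (n + 1))) := by
      rw [ENNReal.ofReal_pow (by norm_num)]
      congr 1
      rw [one_div, one_div, ENNReal.ofReal_inv_of_pos (by norm_num), ENNReal.ofReal_ofNat]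
    rw [this]
    apply ENNReal.ofReal_le_ofReal
    have h : (((n + 1 : ℕ) : ℝ)) ^ 2 ≤ 4 * 2 ^ (2 * Nat.log 2 (n + 1)) := by
      exact_mod_cast le_two_pow n
    rw [one_div_pow, mul_one_div, div_le_div_iff₀ (by positivity) (by positivity)]
    linarith
  refine ne_top_of_le_ne_top ?_ (ENNReal.tsum_le_tsum hle)
  have hs : Summable (fun n : ℕ => 4 * (1 / ((n + 1 : ℕ) : ℝ) ^ 2)) :=
    ((summable_nat_add_iff 1).2 (Real.summable_one_div_nat_pow.2 one_lt_two)).mul_left 4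
  exact hs.tsum_ofReal_ne_top

/-- A set of positive measure misses only few of the sets `Gset n i`. -/
theorem miss_bound (hμ : IsFairCoin μ) (W : Set (ℕ → Bool)) (hW : 0 < μ W) :
    ∃ L : ℕ, ∀ n, ∀ P : Finset ℕ, (∀ i ∈ P, Disjoint W (Gset n i)) →
      P.card ≤ L * (n + 1) ^ 2 := by
  have := hμ.1
  have hc : 0 < μ.real W := ENNReal.toReal_pos hW.ne' (measure_ne_top _ _)
  obtain ⟨L, hL⟩ := exists_nat_ge (-Real.log (μ.real W))
  refine ⟨L, fun n P hP => ?_⟩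
  set q : ℝ := (1 / 2 : ℝ) ^ (2 * Nat.log 2 (n + 1)) with hq
  have hq1 : q ≤ 1 := pow_le_one₀ (by norm_num) (by norm_num)
  have h1 : μ.real W ≤ (1 - q) ^ P.card := by
    rw [← meas_compl hμ]
    refine measureReal_mono ?_
    exact subset_iInter₂ fun i hi => (hP i hi).subset_compl_right
  have h2 : (1 - q) ^ P.card ≤ Real.exp (-(P.card * q)) := by
    have : 1 - q ≤ Real.exp (-q) := Real.one_sub_le_exp_neg q
    calc (1 - q) ^ P.card ≤ Real.exp (-q) ^ P.card := pow_le_pow_left₀ (by linarith) this _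
      _ = _ := by rw [← Real.exp_nat_mul]; ring_nf
  have h3 : Real.log (μ.real W) ≤ -(P.card * q) := (Real.log_le_iff_le_exp hc).2 (h1.trans h2)
  have h4 : P.card * q ≤ L := by linarith
  have h5 : (2 : ℝ) ^ (2 * Nat.log 2 (n + 1)) ≤ ((n : ℝ) + 1) ^ 2 := by
    exact_mod_cast two_pow_le n
  have h6 : q * 2 ^ (2 * Nat.log 2 (n + 1)) = 1 := by
    rw [hq, ← mul_pow]; norm_num
  have h7 : (P.card : ℝ) ≤ L * ((n : ℝ) + 1) ^ 2 := by
    calc (P.card : ℝ) = P.card * q * 2 ^ (2 * Nat.log 2 (n + 1)) := by rw [mul_assoc, h6, mul_one]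
      _ ≤ L * ((n : ℝ) + 1) ^ 2 := by gcongr
  exact_mod_cast h7

theorem capture (hμ : IsFairCoin μ) (F : Set (ℕ → ℕ)) (A : Set (ℕ → Bool)) (hA : μ A = 0)
    (hF : ∀ f ∈ F, {x | ∃ᶠ n in atTop, x ∈ Gset n (f n)} ⊆ A) :
    ∃ φ : ℕ → Finset ℕ, IsSlalom φ ∧ ∀ f ∈ F, ∀ᶠ n in atTop, f n ∈ φ n := by
  have hprob := hμ.1
  obtain ⟨V, hAV, hVo, hV⟩ := A.exists_isOpen_lt_of_lt (μ := μ) 1 (by rw [hA]; exact one_pos)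
  set ν := μ.restrict Vᶜ with hν
  set K := ν.support with hK
  have hKc : IsClosed K := Measure.isClosed_support
  have hKV : K ⊆ Vᶜ := by
    apply Measure.support_subset_of_isClosed hVo.isClosed_compl
    exact ae_restrict_mem hVo.isClosed_compl.measurableSet
  have hνK : ν Kᶜ = 0 := Measure.measure_compl_support
  have hpos : ∀ U : Set (ℕ → Bool), IsOpen U → (K ∩ U).Nonempty → 0 < μ (K ∩ U) := by
    rintro U hU ⟨x, hxK, hxU⟩
    have h1 : 0 < ν U := (Measure.mem_support_iff_forall x).1 hxK U (hU.mem_nhds hxU)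
    have h2 : ν (K ∩ U) = ν U := by
      rw [inter_comm]
      exact measure_inter_conull hνK
    exact (h2 ▸ h1).trans_le (Measure.restrict_apply_le _ _)
  have hKne : K.Nonempty := by
    rw [nonempty_iff_ne_empty]
    intro h
    rw [h, compl_empty, hν, Measure.restrict_apply_univ, prob_compl_eq_zero_iff hVo.measurableSet]
      at hνK
    exact hV.ne hνK
  obtain ⟨b, hb⟩ := (TopologicalSpace.countable_countableBasis (ℕ → Bool)).exists_eq_range
    (by
      obtain ⟨u, hu, -⟩ := (TopologicalSpace.isBasis_countableBasis
        (ℕ → Bool)).exists_subset_of_mem_open (mem_univ (fun _ => true)) isOpen_univ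
      exact ⟨u, hu⟩)
  have hbo : ∀ j, IsOpen (b j) := fun j =>
    TopologicalSpace.isOpen_of_mem_countableBasis (hb ▸ mem_range_self j)
  have hex : ∀ j, ∃ L : ℕ, (K ∩ b j).Nonempty → ∀ n, ∀ P : Finset ℕ,
      (∀ i ∈ P, Disjoint (K ∩ b j) (Gset n i)) → P.card ≤ L * (n + 1) ^ 2 := by
    intro j
    by_cases h : (K ∩ b j).Nonempty
    · obtain ⟨L, hL⟩ := miss_bound hμ _ (hpos _ (hbo j) h)
      exact ⟨L, fun _ => hL⟩
    · exact ⟨0, fun h' => absurd h' h⟩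
  choose L hL using hex
  let S : ℕ → ℕ → Set ℕ := fun j n => {i | Disjoint (K ∩ b j) (Gset n i)}
  have hSfin : ∀ j n, (K ∩ b j).Nonempty → (S j n).Finite := by
    intro j n h
    by_contra hinf
    obtain ⟨P, hP, hPc⟩ := Set.Infinite.exists_subset_card_eq hinf (L j * (n + 1) ^ 2 + 1)
    have := hL j h n P (fun i hi => hP hi)
    omega
  classical
  let T : ℕ → ℕ → Finset ℕ := fun j n =>
    if h : (K ∩ b j).Nonempty then (hSfin j n h).toFinset else ∅
  have hT : ∀ j n, (T j n).card ≤ L j * (n + 1) ^ 2 := by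
    intro j n
    by_cases h : (K ∩ b j).Nonempty
    · simp only [T, dif_pos h]
      exact hL j h n _ (fun i hi => (Set.Finite.mem_toFinset _).1 hi)
    · simp [T, dif_neg h]
  let φ : ℕ → Finset ℕ := fun n =>
    ((Finset.range (n + 1)).filter (fun j => L j ≤ n + 1)).biUnion (fun j => T j n)
  refine ⟨φ, ⟨4, fun n => ?_⟩, fun f hf => ?_⟩
  · refine (Finset.card_biUnion_le_card_mul _ _ ((n + 1) ^ 3) ?_).trans ?_
    · intro j hj
      refine (hT j n).trans ?_
      rw [pow_succ' _ 2]
      exact Nat.mul_le_mul_right _ (Finset.mem_filter.1 hj).2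
    · rw [pow_succ' _ 3]
      refine Nat.mul_le_mul_right _ ?_
      exact (Finset.card_filter_le _ _).trans (by simp)
  · have : CompactSpace K := isCompact_iff_compactSpace.1 hKc.isCompact
    have : Nonempty K := hKne.to_subtype
    obtain ⟨m, hm⟩ := nonempty_interior_of_iUnion_of_closed
      (f := fun m : ℕ => {x : K | ∀ n ≥ m, (x : ℕ → Bool) ∉ Gset n (f n)}) (by
        intro m
        have : {x : K | ∀ n ≥ m, (x : ℕ → Bool) ∉ Gset n (f n)}
          = ⋂ n ≥ m, (fun x : K => (x : ℕ → Bool)) ⁻¹' (Gset n (f n))ᶜ := by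
          ext x; simp
        rw [this]
        exact isClosed_biInter fun n _ =>
          (isOpen_Gset n (f n)).isClosed_compl.preimage continuous_subtype_val) (by
        ext x
        simp only [mem_iUnion, mem_ofPred_eq, mem_univ, iff_true]
        have hx : (x : ℕ → Bool) ∉ {x | ∃ᶠ n in atTop, x ∈ Gset n (f n)} := fun h =>
          hKV x.2 (hAV (hF f hf h))
        simp only [mem_ofPred_eq, not_frequently] at hx
        exact eventually_atTop.1 hx)
    obtain ⟨x, hx⟩ := hm
    rw [mem_interior] at hx
    obtain ⟨O, hO, hOo, hxO⟩ := hx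
    obtain ⟨O', hO', rfl⟩ := isOpen_induced_iff.1 hOo
    obtain ⟨u, hu, hxu, huO⟩ :=
      (TopologicalSpace.isBasis_countableBasis (ℕ → Bool)).exists_subset_of_mem_open hxO hO'
    rw [hb] at hu
    obtain ⟨j, rfl⟩ := hu
    have hne : (K ∩ b j).Nonempty := ⟨x, x.2, hxu⟩
    filter_upwards [eventually_ge_atTop m, eventually_ge_atTop j, eventually_ge_atTop (L j)]
      with n h1 h2 h3
    simp only [φ, Finset.mem_biUnion, Finset.mem_filter, Finset.mem_range]
    refine ⟨j, ⟨by omega, by omega⟩, ?_⟩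
    simp only [T, dif_pos hne, Set.Finite.mem_toFinset, S, mem_ofPred_eq]
    rw [Set.disjoint_left]
    rintro y ⟨hyK, hyb⟩
    exact hO (show (⟨y, hyK⟩ : K) ∈ _ from huO hyb) n h1

theorem D1 (hμ : IsFairCoin μ) (F : Set (ℕ → ℕ))
    (hF : ¬ ∃ φ : ℕ → Finset ℕ, IsSlalom φ ∧ ∀ f ∈ F, ∀ᶠ n in atTop, f n ∈ φ n) :
    ∃ 𝒜 : Set (Set (ℕ → Bool)), #𝒜 ≤ #F ∧ (∀ A ∈ 𝒜, μ A = 0) ∧ μ (⋃₀ 𝒜) ≠ 0 := by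
  refine ⟨(fun f : ℕ → ℕ => {x | ∃ᶠ n in atTop, x ∈ Gset n (f n)}) '' F, mk_image_le, ?_, ?_⟩
  · rintro _ ⟨f, -, rfl⟩
    exact Nf_null hμ f
  · intro h
    exact hF (capture hμ F _ h fun f hf => subset_sUnion_of_mem (mem_image_of_mem _ hf))

end fun_to_null

theorem not_capture_univ :
    ¬ ∃ φ : ℕ → Finset ℕ, IsSlalom φ ∧
      ∀ f ∈ (univ : Set (ℕ → ℕ)), ∀ᶠ n in atTop, f n ∈ φ n := by
  rintro ⟨φ, -, h⟩
  choose f hf using fun n => Infinite.exists_notMem_finset (φ n)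
  obtain ⟨n, hn⟩ := (h f (mem_univ _)).exists
  exact hf n hn

/-- add(N) = b_{⊆*}. -/
theorem stmt12 (μ : Measure (ℕ → Bool)) (hμ : IsFairCoin μ) :
    sInf {c : Cardinal | ∃ 𝒜 : Set (Set (ℕ → Bool)), #𝒜 = c ∧
        (∀ A ∈ 𝒜, μ A = 0) ∧ μ (⋃₀ 𝒜) ≠ 0} =
      sInf {c : Cardinal | ∃ F : Set (ℕ → ℕ), #F = c ∧
        ¬ ∃ φ : ℕ → Finset ℕ, IsSlalom φ ∧ ∀ f ∈ F, ∀ᶠ n in atTop, f n ∈ φ n} := by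
  have := hμ.1
  apply le_antisymm
  · refine le_csInf ⟨_, univ, rfl, not_capture_univ⟩ ?_
    rintro c ⟨F, rfl, hF⟩
    obtain ⟨𝒜, h1, h2⟩ := D1 hμ F hF
    refine le_trans (csInf_le' ?_) h1
    exact ⟨𝒜, rfl, h2⟩
  · obtain ⟨𝒜, -, h2⟩ := D1 hμ univ not_capture_univ
    refine le_csInf ⟨_, 𝒜, rfl, h2⟩ ?_
    rintro c ⟨𝒜, rfl, h0, h1⟩
    obtain ⟨F, h3, h4⟩ := D2 _ μ 𝒜 h0 h1
    refine le_trans (csInf_le' ?_) h3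
    exact ⟨F, rfl, h4⟩
end

section
/- cof(N) equals the least cardinality of a family Φ of slaloms such that for every f ∈ ω^ω there exists φ ∈ Φ with f(n) ∈ φ(n) for all but finitely many n. Here cof(N) is the least cardinality of a family of null subsets of 2^ω that is cofinal in the null ideal under inclusion. (In the paper's notation: d_{⊆*} = cof(N).) -/
open Filter Set MeasureTheory Cardinal

open scoped ENNReal

abbrev CSp := ℕ → Bool

lemma exists_enum_s13 : ∃ e : ℕ → TopologicalSpace.Clopens CSp, Function.Surjective e := by
  have : Countable (TopologicalSpace.Clopens CSp) :=
    TopologicalSpace.Clopens.countable_iff_secondCountable.2 inferInstance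
  exact exists_surjective_nat _

lemma open_decomp (U : Set CSp) (hU : IsOpen U) :
    ∃ W : ℕ → Set CSp, (∀ i, IsClopen (W i)) ∧ Pairwise (Function.onFun Disjoint W) ∧
      ⋃ i, W i = U := by
  classical
  obtain ⟨e, he⟩ := exists_enum_s13
  let V : ℕ → Set CSp := fun i => if (e i : Set CSp) ⊆ U then (e i : Set CSp) else ∅
  have hV : ∀ i, IsClopen (V i) := by
    intro i
    by_cases h : (e i : Set CSp) ⊆ U
    · simpa [V, h] using (e i).isClopen
    · simpa [V, h] using isClopen_empty
  refine ⟨disjointed V, fun i => ?_, disjoint_disjointed V, ?_⟩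
  · exact disjointedRec (p := fun s => IsClopen s) (fun t i ht => ht.diff (hV i)) (hV i)
  · rw [iUnion_disjointed]
    apply subset_antisymm
    · refine iUnion_subset fun i => ?_
      by_cases h : (e i : Set CSp) ⊆ U <;> simp [V, h]
    · intro x hx
      obtain ⟨v, hv, hxv, hvU⟩ := (isTopologicalBasis_isClopen (X := CSp)).exists_subset_of_mem_open hx hU
      obtain ⟨i, hi⟩ := he ⟨v, hv⟩
      refine mem_iUnion.2 ⟨i, ?_⟩
      simp only [V, hi]
      rw [if_pos]
      · exact hxv
      · exact hvU

lemma null_char (μ : Measure CSp) [IsProbabilityMeasure μ] (B : Set CSp) (hB : μ B = 0) :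
    ∃ C : ℕ → TopologicalSpace.Clopens CSp, (∀ k, μ (C k) ≤ (1/2 : ℝ≥0∞) ^ k) ∧
      ∀ x ∈ B, ∃ᶠ k in atTop, x ∈ C k := by
  have h1 : ∀ n : ℕ, ∃ U : Set CSp, B ⊆ U ∧ IsOpen U ∧ μ U < (1/2 : ℝ≥0∞) ^ n := by
    intro n
    apply B.exists_isOpen_lt_of_lt
    rw [hB]
    exact ENNReal.pow_pos (by simp) n
  choose U hBU hUo hUm using h1
  choose W hWc hWd hWU using fun n => open_decomp (U n) (hUo n)
  let E : ℕ → Set CSp := fun i => W (Nat.unpair i).1 (Nat.unpair i).2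
  have hE : ∑' i, μ (E i) ≠ ∞ := by
    have : ∑' i, μ (E i) = ∑' p : ℕ × ℕ, μ (W p.1 p.2) :=
      Nat.pairEquiv.symm.tsum_eq (fun p : ℕ × ℕ => μ (W p.1 p.2))
    rw [this, ENNReal.tsum_prod (f := fun n j => μ (W n j))]
    have h2 : ∀ n, ∑' j, μ (W n j) ≤ (1/2 : ℝ≥0∞) ^ n := by
      intro n
      rw [← measure_iUnion (hWd n) (fun j => (hWc n j).isOpen.measurableSet), hWU]
      exact (hUm n).le
    refine ne_top_of_le_ne_top ?_ (ENNReal.tsum_le_tsum h2)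
    rw [ENNReal.tsum_geometric]
    simp
  have hinf : ∀ x ∈ B, ∀ m, ∃ i ≥ m, x ∈ E i := by
    intro x hx m
    have : x ∈ U m := hBU m hx
    rw [← hWU] at this
    obtain ⟨j, hj⟩ := mem_iUnion.1 this
    exact ⟨Nat.pair m j, Nat.left_le_pair m j, by simpa [E] using hj⟩
  have ht := ENNReal.tendsto_sum_nat_add _ hE
  obtain ⟨N, hN, hNt⟩ := extraction_forall_of_eventually
    (P := fun k N => ∑' i, μ (E (i + N)) ≤ (1/2 : ℝ≥0∞) ^ k) (fun k =>
      ht.eventually_le_const (ENNReal.pow_pos (by simp) k))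
  have hcl : ∀ k, IsClopen (⋃ i ∈ Finset.Ico (N k) (N (k+1)), E i) := fun k =>
    isClopen_biUnion_finset (fun i _ => hWc _ _)
  refine ⟨fun k => ⟨_, hcl k⟩, fun k => ?_, fun x hx => ?_⟩
  · refine le_trans ?_ (hNt k)
    refine le_trans (measure_mono (t := ⋃ i, E (i + N k)) ?_) (measure_iUnion_le _)
    intro x hx
    simp only [TopologicalSpace.Clopens.coe_mk, mem_iUnion, Finset.mem_Ico] at hx ⊢
    obtain ⟨i, hi, hxi⟩ := hx
    exact ⟨i - N k, by rwa [Nat.sub_add_cancel hi.1]⟩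
  · rw [frequently_atTop]
    intro m
    obtain ⟨i, hi, hxi⟩ := hinf x hx (N m)
    let k := Nat.findGreatest (fun k => N k ≤ i) i
    have hmi : m ≤ i := (hN.id_le m).trans hi
    have hk1 : m ≤ k := Nat.le_findGreatest hmi hi
    have hk2 : N k ≤ i := Nat.findGreatest_spec (P := fun k => N k ≤ i) hmi hi
    have hk3 : i < N (k+1) := by
      by_contra h
      push Not at h
      have h4 : k + 1 ≤ k := Nat.le_findGreatest (P := fun k => N k ≤ i) ((hN.id_le _).trans h) h
      omega
    refine ⟨k, hk1, ?_⟩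
    change x ∈ ⋃ i ∈ Finset.Ico (N k) (N (k+1)), E i
    simp only [mem_iUnion, Finset.mem_Ico]
    exact ⟨i, ⟨hk2, hk3⟩, hxi⟩

lemma summable_aux (K : ℕ) : ∑' k : ℕ, ((k + 1 : ℕ) ^ K : ℝ≥0∞) * (1/2) ^ k ≠ ∞ := by
  have h : Summable (fun k : ℕ => (((k + 1 : ℕ) : NNReal) ^ K) * (1/2) ^ k) := by
    rw [← NNReal.summable_coe]
    have := summable_pow_mul_geometric_of_norm_lt_one K (r := (1/2 : ℝ)) (by norm_num)
    have h2 := ((summable_nat_add_iff 1).2 this).mul_left 2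
    refine h2.congr fun k => ?_
    push_cast
    ring
  have := ENNReal.tsum_coe_ne_top_iff_summable.2 h
  convert this using 4 with k
  push_cast
  simp

lemma dir1 (μ : Measure CSp) [IsProbabilityMeasure μ] (Φ : Set (ℕ → Finset ℕ))
    (hΦ : ∀ φ ∈ Φ, IsSlalom φ) (hf : ∀ f : ℕ → ℕ, ∃ φ ∈ Φ, ∀ᶠ n in atTop, f n ∈ φ n) :
    ∃ 𝒜 : Set (Set CSp), #𝒜 ≤ #Φ ∧
        (∀ A ∈ 𝒜, μ A = 0) ∧ ∀ B : Set CSp, μ B = 0 → ∃ A ∈ 𝒜, B ⊆ A := by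
  classical
  obtain ⟨e, he⟩ := exists_enum_s13
  let D : (ℕ → Finset ℕ) → ℕ → Set CSp := fun φ k =>
    ⋃ c ∈ (φ k).filter (fun c => μ (e c) ≤ (1/2 : ℝ≥0∞) ^ k), (e c : Set CSp)
  refine ⟨(fun φ => {x | ∃ᶠ k in atTop, x ∈ D φ k}) '' Φ, mk_image_le, ?_, ?_⟩
  · rintro _ ⟨φ, hφ, rfl⟩
    obtain ⟨K, hK⟩ := hΦ φ hφ
    apply measure_setOfPred_frequently_eq_zero
    refine ne_top_of_le_ne_top (summable_aux K) (ENNReal.tsum_le_tsum fun k => ?_)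
    refine (measure_biUnion_finset_le _ _).trans ?_
    refine (Finset.sum_le_card_nsmul _ _ ((1/2 : ℝ≥0∞) ^ k) ?_).trans ?_
    · intro c hc
      exact (Finset.mem_filter.1 hc).2
    · rw [nsmul_eq_mul]
      gcongr
      exact_mod_cast (Finset.card_filter_le _ _).trans (hK k)
  · intro B hB
    obtain ⟨C, hC, hBC⟩ := null_char μ B hB
    choose f hfe using fun k => he (C k)
    obtain ⟨φ, hφ, hfφ⟩ := hf f
    refine ⟨_, ⟨φ, hφ, rfl⟩, fun x hx => ?_⟩
    refine ((hBC x hx).and_eventually hfφ).mono ?_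
    rintro k ⟨h1, h2⟩
    simp only [D, mem_iUnion, Finset.mem_filter]
    refine ⟨f k, ⟨h2, ?_⟩, ?_⟩
    · rw [hfe]; exact hC k
    · rw [hfe]; exact h1

def ee (n : ℕ) : ℕ := 2 * Nat.log 2 (n + 1)

/-- the basic clopen sets -/
def GG (n i : ℕ) : Set (ℕ → Bool) := {x | ∀ j < ee n, x (Nat.pair i j) = true}

lemma GG_clopen (n i : ℕ) : IsClopen (GG n i) := by
  have : GG n i = ⋂ j ∈ Finset.range (ee n), (fun x : ℕ → Bool => x (Nat.pair i j)) ⁻¹' {true} := by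
    ext x; simp [GG]
  rw [this]
  exact isClopen_biInter_finset fun j _ =>
    (isClopen_discrete _).preimage (continuous_apply _)

lemma GG_inter_measure (μ : Measure (ℕ → Bool)) (hμ : IsFairCoin μ) (n : ℕ) (T : Finset ℕ) :
    μ (⋂ i ∈ T, GG n i) = (1 / 2 : ENNReal) ^ (ee n * T.card) := by
  classical
  have h := hμ.2 ((T ×ˢ Finset.range (ee n)).image (fun p => Nat.pair p.1 p.2)) (fun _ => true)
  rw [Finset.card_image_of_injective, Finset.card_product, Finset.card_range] at h
  · rw [mul_comm, ← h]
    congr 1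
    ext x
    simp only [GG, mem_iInter, mem_ofPred_eq, Finset.mem_image, Finset.mem_product, Finset.mem_range,
      Prod.exists]
    constructor
    · rintro h _ ⟨i, j, ⟨hi, hj⟩, rfl⟩
      exact h i hi j hj
    · intro h i hi j hj
      exact h _ ⟨i, j, ⟨hi, hj⟩, rfl⟩
  · intro p q h
    exact Nat.pairEquiv.injective h

lemma GG_measure (μ : Measure (ℕ → Bool)) (hμ : IsFairCoin μ) (n i : ℕ) :
    μ (GG n i) = (1 / 2 : ENNReal) ^ (ee n) := by
  simpa using GG_inter_measure μ hμ n {i}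

lemma GG_indep (μ : Measure (ℕ → Bool)) (hμ : IsFairCoin μ) (n : ℕ) (F : Finset ℕ) :
    ∀ T : Finset ℕ, Disjoint F T →
    μ.real ((⋂ i ∈ F, (GG n i)ᶜ) ∩ ⋂ i ∈ T, GG n i) =
      (1 - (1 / 2 : ℝ) ^ (ee n)) ^ F.card * ((1 / 2 : ℝ) ^ (ee n)) ^ T.card := by
  classical
  have := hμ.1
  induction F using Finset.induction_on with
  | empty =>
    intro T _
    simp [Measure.real, GG_inter_measure μ hμ, pow_mul]
  | insert a F ha ih =>
    intro T hT
    rw [Finset.disjoint_insert_left] at hT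
    have h1 := ih T hT.2
    have h2 := ih (insert a T) (by
      rw [Finset.disjoint_insert_right]; exact ⟨ha, hT.2⟩)
    have e1 : (⋂ i ∈ insert a F, (GG n i)ᶜ) ∩ ⋂ i ∈ T, GG n i =
        ((⋂ i ∈ F, (GG n i)ᶜ) ∩ ⋂ i ∈ T, GG n i) \ GG n a := by
      rw [Finset.set_biInter_insert]
      ext x; simp only [mem_inter_iff, Set.mem_sdiff, mem_compl_iff]; tauto
    have e2 : (⋂ i ∈ F, (GG n i)ᶜ) ∩ ⋂ i ∈ insert a T, GG n i =
        ((⋂ i ∈ F, (GG n i)ᶜ) ∩ ⋂ i ∈ T, GG n i) ∩ GG n a := by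
      rw [Finset.set_biInter_insert]
      ext x; simp only [mem_inter_iff]; tauto
    rw [e2] at h2
    have h3 := measureReal_inter_add_sdiff (μ := μ) (s := (⋂ i ∈ F, (GG n i)ᶜ) ∩ ⋂ i ∈ T, GG n i)
      (GG_clopen n a).isOpen.measurableSet
    rw [e1, Finset.card_insert_of_notMem ha]
    rw [Finset.card_insert_of_notMem hT.1] at h2
    rw [h1, h2] at h3
    rw [eq_sub_of_add_eq' h3]
    ring

lemma ee_le (n : ℕ) : (2 : ℝ) ^ ee n ≤ (n + 1) ^ 2 := by
  have : 2 ^ Nat.log 2 (n + 1) ≤ n + 1 := Nat.pow_log_le_self 2 (by omega)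
  rw [ee, mul_comm, pow_mul]
  gcongr
  exact_mod_cast this

lemma ee_ge (n : ℕ) : (1 / 2 : ℝ) ^ ee n ≤ 4 * (1 / ((n + 1 : ℕ) : ℝ) ^ 2) := by
  have : n + 1 < 2 ^ (Nat.log 2 (n + 1) + 1) := Nat.lt_pow_succ_log_self (by norm_num) _
  have h2 : ((n + 1 : ℕ) : ℝ) ≤ 2 ^ (Nat.log 2 (n + 1)) * 2 := by
    rw [← pow_succ]; exact_mod_cast this.le
  rw [one_div_pow, ee, mul_comm 2, pow_mul, mul_one_div, div_le_div_iff₀ (by positivity) (by positivity)]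
  have : (((n + 1 : ℕ) : ℝ)) ^ 2 ≤ (2 ^ (Nat.log 2 (n + 1)) * 2) ^ 2 := by gcongr
  nlinarith

lemma ee_sum : ∑' n, (1 / 2 : ENNReal) ^ ee n ≠ ⊤ := by
  have h : Summable (fun n => (1 / 2 : NNReal) ^ ee n) := by
    rw [← NNReal.summable_coe]
    have h1 : Summable (fun n : ℕ => 4 * (1 / ((n + 1 : ℕ) : ℝ) ^ 2)) :=
      ((summable_nat_add_iff 1).2 (Real.summable_one_div_nat_pow.2 (by norm_num : 1 < 2))).mul_left 4
    refine h1.of_nonneg_of_le (fun n => by positivity) (fun n => ?_)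
    have := ee_ge n
    push_cast at this ⊢
    exact this
  have := ENNReal.tsum_coe_ne_top_iff_summable.2 h
  convert this using 4 with k
  push_cast
  simp

lemma Bf_null (μ : Measure (ℕ → Bool)) (hμ : IsFairCoin μ) (f : ℕ → ℕ) :
    μ {x | ∃ᶠ n in atTop, x ∈ GG n (f n)} = 0 := by
  apply measure_setOfPred_frequently_eq_zero
  refine ne_of_eq_of_ne ?_ ee_sum
  exact tsum_congr fun n => GG_measure μ hμ n (f n)

lemma card_bound (μ : Measure (ℕ → Bool)) (hμ : IsFairCoin μ) (K V : Set (ℕ → Bool)) (n : ℕ)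
    (F : Finset ℕ) (hF : ∀ i ∈ F, μ.restrict K (V ∩ GG n i) = 0) :
    (μ.restrict K).real V * F.card ≤ (n + 1) ^ 2 := by
  have := hμ.1
  have h0 := GG_indep μ hμ n F ∅ (by simp)
  simp only [Finset.notMem_empty, iInter_of_empty, iInter_univ, inter_univ, Finset.card_empty,
    pow_zero, mul_one] at h0
  have h1 : (μ.restrict K).real V ≤ (1 - (1 / 2 : ℝ) ^ (ee n)) ^ F.card := by
    rw [← h0]
    have h2 : (μ.restrict K) V ≤ μ (⋂ i ∈ F, (GG n i)ᶜ) := by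
      calc (μ.restrict K) V ≤ (μ.restrict K) ((⋂ i ∈ F, (GG n i)ᶜ) ∪ ⋃ i ∈ F, (V ∩ GG n i)) := by
            apply measure_mono
            intro x hx
            by_cases h : ∃ i ∈ F, x ∈ GG n i
            · right
              obtain ⟨i, hi, hx'⟩ := h
              exact mem_biUnion (show i ∈ (F : Set ℕ) from hi) ⟨hx, hx'⟩
            · left
              push Not at h
              simpa using h
        _ ≤ (μ.restrict K) (⋂ i ∈ F, (GG n i)ᶜ) + (μ.restrict K) (⋃ i ∈ F, (V ∩ GG n i)) :=
            measure_union_le _ _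
        _ = (μ.restrict K) (⋂ i ∈ F, (GG n i)ᶜ) := by
            have h9 : (μ.restrict K) (⋃ i ∈ F, (V ∩ GG n i)) = 0 :=
              (measure_biUnion_null_iff F.countable_toSet).2 hF
            rw [h9, add_zero]
        _ ≤ _ := Measure.restrict_apply_le _ _
    exact ENNReal.toReal_mono (measure_ne_top _ _) h2
  set ε : ℝ := (1 / 2 : ℝ) ^ (ee n) with hε
  have hε0 : 0 < ε := by positivity
  have hε1 : ε ≤ 1 := pow_le_one₀ (by norm_num) (by norm_num)
  have h3 : 1 + F.card * ε ≤ (1 + ε) ^ F.card := one_add_mul_le_pow (by linarith) _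
  have h4 : (1 - ε) ^ F.card * (1 + ε) ^ F.card ≤ 1 := by
    rw [← mul_pow]
    exact pow_le_one₀ (by nlinarith) (by nlinarith)
  have h5 : 0 ≤ (μ.restrict K).real V := measureReal_nonneg
  have h6 : (μ.restrict K).real V * (F.card * ε) ≤ 1 := by
    calc _ ≤ (1 - ε) ^ F.card * (1 + ε) ^ F.card := by
          gcongr
          linarith
      _ ≤ 1 := h4
  have h7 : ε * 2 ^ ee n = 1 := by rw [hε, ← mul_pow]; norm_num
  calc (μ.restrict K).real V * F.card = (μ.restrict K).real V * (F.card * ε) * 2 ^ ee n := by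
        rw [mul_assoc, mul_assoc, h7, mul_one]
    _ ≤ 1 * 2 ^ ee n := by gcongr
    _ ≤ _ := by rw [one_mul]; exact ee_le n

lemma slalom_exists (μ : Measure (ℕ → Bool)) (hμ : IsFairCoin μ) (K V : Set (ℕ → Bool)) :
    ∃ φ : ℕ → Finset ℕ, IsSlalom φ ∧ (μ.restrict K V ≠ 0 → ∀ n ≥ 1, ∀ i,
      μ.restrict K (V ∩ GG n i) = 0 → i ∈ φ n) := by
  classical
  have := hμ.1
  by_cases hV : μ.restrict K V = 0
  · exact ⟨fun _ => ∅, ⟨0, by simp⟩, fun h => absurd hV h⟩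
  have hδ : 0 < (μ.restrict K).real V := ENNReal.toReal_pos hV (measure_ne_top _ _)
  set δ := (μ.restrict K).real V with hδd
  obtain ⟨k, hk⟩ := pow_unbounded_of_one_lt (1 / δ) (by norm_num : (1 : ℝ) < 2)
  have hb : ∀ n ≥ 1, ∀ F : Finset ℕ, (∀ i ∈ F, μ.restrict K (V ∩ GG n i) = 0) →
      F.card ≤ (n + 1) ^ (k + 2) := by
    intro n hn F hF
    have h1 := card_bound μ hμ K V n F hF
    rw [← hδd] at h1
    have h2 : (F.card : ℝ) ≤ (1 / δ) * (n + 1) ^ 2 := by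
      rw [one_div, ← div_eq_inv_mul, le_div_iff₀ hδ]; linarith
    have h3 : (2 : ℝ) ^ k ≤ (n + 1) ^ k := by
      gcongr
      have : (1 : ℝ) ≤ n := by exact_mod_cast hn
      linarith
    have : (F.card : ℝ) ≤ (n + 1) ^ (k + 2) := by
      rw [pow_add]
      refine h2.trans ?_
      gcongr
      exact hk.le.trans h3
    exact_mod_cast this
  have hfin : ∀ n ≥ 1, {i | μ.restrict K (V ∩ GG n i) = 0}.Finite := by
    intro n hn
    by_contra h
    obtain ⟨F, hF, hc⟩ := Set.Infinite.exists_subset_card_eq h ((n + 1) ^ (k + 2) + 1)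
    have := hb n hn F (fun i hi => hF hi)
    omega
  refine ⟨fun n => if h : n ≥ 1 then (hfin n h).toFinset else ∅, ⟨k + 2, fun n => ?_⟩, ?_⟩
  · by_cases h : n ≥ 1
    · simp only [h, dite_true]
      exact hb n h _ (fun i hi => by simpa using hi)
    · simp [h]
  · intro _ n hn i hi
    simp only [hn, dite_true]
    simpa using hi

lemma baire_step (ν : Measure (ℕ → Bool)) (hν : ν ≠ 0) (f : ℕ → ℕ)
    (h : ∀ x ∈ ν.support, ¬ ∃ᶠ n in atTop, x ∈ GG n (f n)) :
    ∃ V ∈ TopologicalSpace.countableBasis (ℕ → Bool), ν V ≠ 0 ∧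
      ∃ m, ∀ n ≥ m, ν (V ∩ GG n (f n)) = 0 := by
  by_contra hcon
  push Not at hcon
  have hne : ν.support.Nonempty := Measure.nonempty_support hν
  have : CompactSpace ν.support := isCompact_iff_compactSpace.1 Measure.isClosed_support.isCompact
  have : Nonempty ν.support := hne.to_subtype
  let U : ℕ → Set ν.support := fun m => ⋃ n ≥ m, Subtype.val ⁻¹' (GG n (f n))
  have hUo : ∀ m, IsOpen (U m) := fun m => isOpen_biUnion fun n _ =>
    (GG_clopen n (f n)).isOpen.preimage continuous_subtype_val
  have hUd : ∀ m, Dense (U m) := by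
    intro m x
    rw [mem_closure_iff_nhds]
    intro t ht
    obtain ⟨t', ht', hsub⟩ := mem_nhds_subtype _ _ _ |>.1 ht
    obtain ⟨V, hV, hxV, hVt⟩ :=
      (TopologicalSpace.isBasis_countableBasis (ℕ → Bool)).mem_nhds_iff.1 ht'
    have hVo := TopologicalSpace.isOpen_of_mem_countableBasis hV
    have hpos : ν V ≠ 0 :=
      ((Measure.mem_support_iff_forall _).1 x.2 V (hVo.mem_nhds hxV)).ne'
    obtain ⟨n, hn, hn'⟩ := hcon V hV hpos m
    obtain ⟨y, hy, hys⟩ := Measure.nonempty_inter_support_of_pos (pos_iff_ne_zero.2 hn')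
    refine ⟨⟨y, hys⟩, hsub (hVt hy.1), ?_⟩
    simp only [U, mem_iUnion]
    exact ⟨n, hn, hy.2⟩
  obtain ⟨x, hx⟩ := (dense_iInter_of_isOpen_nat hUo hUd).nonempty
  refine h x x.2 ?_
  rw [frequently_atTop]
  intro m
  have := mem_iInter.1 hx m
  simp only [U, mem_iUnion] at this
  obtain ⟨n, hn, hxn⟩ := this
  exact ⟨n, hn, hxn⟩

lemma dir2_step (μ : Measure (ℕ → Bool)) (hμ : IsFairCoin μ) (A : Set (ℕ → Bool)) (hA : μ A = 0) :
    ∃ Ψ : Set (ℕ → Finset ℕ), Ψ.Countable ∧ (∀ φ ∈ Ψ, IsSlalom φ) ∧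
      ∀ f : ℕ → ℕ, {x | ∃ᶠ n in atTop, x ∈ GG n (f n)} ⊆ A →
        ∃ φ ∈ Ψ, ∀ᶠ n in atTop, f n ∈ φ n := by
  have := hμ.1
  have hT : μ (toMeasurable μ A)ᶜ = 1 := by
    rw [prob_compl_eq_one_iff (measurableSet_toMeasurable _ _), measure_toMeasurable, hA]
  obtain ⟨K, hKT, hKc, hK⟩ := (measurableSet_toMeasurable μ A).compl.exists_lt_isClosed_of_ne_top
    (measure_ne_top μ _) (r := 0) (by rw [hT]; exact zero_lt_one)
  choose φ hφ1 hφ2 using fun V => slalom_exists μ hμ K V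
  refine ⟨φ '' TopologicalSpace.countableBasis (ℕ → Bool),
    (TopologicalSpace.countable_countableBasis _).image _, ?_, ?_⟩
  · rintro _ ⟨V, _, rfl⟩
    exact hφ1 V
  · intro f hf
    have hsub : (μ.restrict K).support ⊆ K :=
      Measure.support_subset_of_isClosed hKc (ae_restrict_mem hKc.measurableSet)
    obtain ⟨V, hV, hpos, m, hm⟩ := baire_step (μ.restrict K)
      (by rw [Ne, Measure.restrict_eq_zero]; exact hK.ne') f
      (fun x hx hfr => hKT (hsub hx) (subset_toMeasurable μ A (hf hfr)))
    refine ⟨φ V, ⟨V, hV, rfl⟩, ?_⟩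
    filter_upwards [eventually_ge_atTop m, eventually_ge_atTop 1] with n hn hn1
    exact hφ2 V hpos n hn1 _ (hm n hn)

lemma singleton_null (μ : Measure (ℕ → Bool)) (hμ : IsFairCoin μ) (x : ℕ → Bool) :
    μ {x} = 0 := by
  have h : ∀ n : ℕ, μ {x} ≤ (1 / 2 : ENNReal) ^ n := by
    intro n
    have := hμ.2 (Finset.range n) x
    rw [Finset.card_range] at this
    rw [← this]
    exact measure_mono (by rintro y rfl; simp)
  have ht : Tendsto (fun n : ℕ => (1 / 2 : ENNReal) ^ n) atTop (nhds 0) :=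
    ENNReal.tendsto_pow_atTop_nhds_zero_of_lt_one (by simp)
  exact le_antisymm (ge_of_tendsto' ht h) zero_le

lemma dir2 (μ : Measure (ℕ → Bool)) (hμ : IsFairCoin μ) (𝒜 : Set (Set (ℕ → Bool)))
    (h0 : ∀ A ∈ 𝒜, μ A = 0) (hc : ∀ B : Set (ℕ → Bool), μ B = 0 → ∃ A ∈ 𝒜, B ⊆ A) :
    ∃ Φ : Set (ℕ → Finset ℕ), #Φ ≤ #𝒜 ∧
        (∀ φ ∈ Φ, IsSlalom φ) ∧ ∀ f : ℕ → ℕ, ∃ φ ∈ Φ, ∀ᶠ n in atTop, f n ∈ φ n := by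
  have := hμ.1
  have hinf : ℵ₀ ≤ #𝒜 := by
    by_contra h
    push Not at h
    have hcount : 𝒜.Countable := Cardinal.le_aleph0_iff_set_countable.1 h.le
    have h1 : μ (⋃₀ 𝒜) = 0 := (measure_sUnion_null_iff hcount).2 h0
    have h2 : ⋃₀ 𝒜 = Set.univ := by
      refine eq_univ_of_forall fun x => ?_
      obtain ⟨A, hA, hx⟩ := hc {x} (singleton_null μ hμ x)
      exact ⟨A, hA, hx rfl⟩
    rw [h2, measure_univ] at h1
    exact one_ne_zero h1
  choose Ψ hΨc hΨs hΨ using fun A : 𝒜 => dir2_step μ hμ A.1 (h0 A.1 A.2)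
  refine ⟨⋃ A, Ψ A, ?_, ?_, ?_⟩
  · have h1 := Cardinal.mk_iUnion_le (ι := 𝒜) Ψ
    refine h1.trans ?_
    refine (mul_le_mul_right (ciSup_le' fun A =>
      Cardinal.le_aleph0_iff_set_countable.2 (hΨc A)) _).trans ?_
    rw [Cardinal.mul_aleph0_eq hinf]
  · intro φ hφ
    obtain ⟨A, hA⟩ := mem_iUnion.1 hφ
    exact hΨs A φ hA
  · intro f
    obtain ⟨A, hA, hsub⟩ := hc _ (Bf_null μ hμ f)
    obtain ⟨φ, hφ, h⟩ := hΨ ⟨A, hA⟩ f hsub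
    exact ⟨φ, mem_iUnion.2 ⟨_, hφ⟩, h⟩

/-- cof(N) = d_{⊆*}. -/
theorem stmt13 (μ : Measure (ℕ → Bool)) (hμ : IsFairCoin μ) :
    sInf {c : Cardinal | ∃ 𝒜 : Set (Set (ℕ → Bool)), #𝒜 = c ∧
        (∀ A ∈ 𝒜, μ A = 0) ∧ ∀ B : Set (ℕ → Bool), μ B = 0 → ∃ A ∈ 𝒜, B ⊆ A} =
      sInf {c : Cardinal | ∃ Φ : Set (ℕ → Finset ℕ), #Φ = c ∧
        (∀ φ ∈ Φ, IsSlalom φ) ∧ ∀ f : ℕ → ℕ, ∃ φ ∈ Φ, ∀ᶠ n in atTop, f n ∈ φ n} := by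
  have := hμ.1
  have hA : ({c : Cardinal | ∃ 𝒜 : Set (Set (ℕ → Bool)), #𝒜 = c ∧
        (∀ A ∈ 𝒜, μ A = 0) ∧ ∀ B : Set (ℕ → Bool), μ B = 0 → ∃ A ∈ 𝒜, B ⊆ A}).Nonempty :=
    ⟨_, {A | μ A = 0}, rfl, fun A h => h, fun B hB => ⟨B, hB, subset_rfl⟩⟩
  obtain ⟨𝒜₀, -, h₀, h₁⟩ := hA.some_mem
  obtain ⟨Φ₀, -, h₂, h₃⟩ := dir2 μ hμ 𝒜₀ h₀ h₁
  apply le_antisymm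
  · refine le_csInf ⟨_, Φ₀, rfl, h₂, h₃⟩ ?_
    rintro _ ⟨Φ, rfl, hs, hf⟩
    obtain ⟨𝒜, hle, ha, hb⟩ := dir1 μ Φ hs hf
    refine le_trans (csInf_le' ?_) hle
    exact ⟨𝒜, rfl, ha, hb⟩
  · refine le_csInf hA ?_
    rintro _ ⟨𝒜, rfl, ha, hb⟩
    obtain ⟨Φ, hle, hs, hf⟩ := dir2 μ hμ 𝒜 ha hb
    refine le_trans (csInf_le' ?_) hle
    exact ⟨Φ, rfl, hs, hf⟩
end
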